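/- arXiv:0812.2265 — 2 statements merged into one kernel-verified Lean document; each statement's English description precedes it below -/
import Mathlib

section
/- In the low temperature phase, the mixing time of any local Markov chain for the exponential random graph model is exponentially large: there exists α > 0 and N such that for all n ≥ N, every ergodic Markov chain on graphs on [n] with stationary distribution p_n whose transitions change at most m(n) edges per step, where m(n)=o(n), has mixing time at least e^{αn}. In particular this holds for the Glauber dynamics. -/
open Finset

open scoped Classical

noncomputable section

/-- The set of edges of the complete graph `K_n` on vertex set `[n] = Fin n`:
unordered pairs of distinct vertices. -/
abbrev EdgeK (n : ℕ) : Type := {e : Sym2 (Fin n) // ¬ e.IsDiag}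

/-- A graph on `[n]`, identified with an element `X ∈ {0,1}^{E(K_n)}`. -/
abbrev Config (n : ℕ) : Type := EdgeK n → Bool

/-- The image of an edge under an injection of vertex sets. -/
def mapEdge {m n : ℕ} (v : Fin m ↪ Fin n) (a : EdgeK m) : EdgeK n :=
  ⟨a.1.map v, fun h => a.2 ((Sym2.isDiag_map v.injective).mp h)⟩

/-- The complete graph `K_n` as a configuration. -/
def fullConfig (n : ℕ) : Config n := fun _ => true

/-- `X ∪ {e}`. -/
def addEdge {n : ℕ} (X : Config n) (e : EdgeK n) : Config n :=
  fun f => if f = e then true else X f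

/-- `X_{e+}` (for `b = true`), resp. `X_{e-}` (for `b = false`). -/
def setEdge {n : ℕ} (X : Config n) (e : EdgeK n) (b : Bool) : Config n :=
  fun f => if f = e then b else X f

/-- `N_G(X)`: the number of tuples of `m` distinct vertices of `[n]` such that every
edge of the pattern graph `G` (a graph on `m` labelled vertices) is mapped to an edge of `X`. -/
def copyCount {n m : ℕ} (X : Config n) (G : Finset (EdgeK m)) : ℕ :=
  (univ.filter fun v : Fin m ↪ Fin n => ∀ a ∈ G, X (mapEdge v a) = true).card

/-- `N_G(X, e)`: the number of such tuples for `X ∪ {e}` which moreover use the edge `e`. -/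
def rootedCount {n m : ℕ} (X : Config n) (G : Finset (EdgeK m)) (e : EdgeK n) : ℕ :=
  (univ.filter fun v : Fin m ↪ Fin n =>
    (∃ a ∈ G, mapEdge v a = e) ∧ ∀ a ∈ G, addEdge X e (mapEdge v a) = true).card

/-- `N_G(X, e, e')`: the number of such tuples for `X ∪ {e, e'}` which use both `e` and `e'`. -/
def rooted2Count {n m : ℕ} (X : Config n) (G : Finset (EdgeK m)) (e e' : EdgeK n) : ℕ :=
  (univ.filter fun v : Fin m ↪ Fin n =>
    (∃ a ∈ G, mapEdge v a = e) ∧ (∃ a ∈ G, mapEdge v a = e') ∧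
      ∀ a ∈ G, addEdge (addEdge X e) e' (mapEdge v a) = true).card

/-- The number of edges of the graph `X`. -/
def edgeCount {n : ℕ} (X : Config n) : ℕ := (univ.filter fun e => X e = true).card

/-- Hamming distance between two graphs: the number of edges of disagreement. -/
def hamDist {n : ℕ} (X Y : Config n) : ℕ := (univ.filter fun f => X f ≠ Y f).card

/-- The Hamiltonian `H(X) = ∑ i, β i * N_{G_i}(X) / n^(|V_i| - 2)`. -/
def ergmH {s : ℕ} (V : Fin s → ℕ) (Pt : ∀ i, Finset (EdgeK (V i))) (β : Fin s → ℝ)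
    (n : ℕ) (X : Config n) : ℝ :=
  ∑ i, β i * (copyCount X (Pt i) : ℝ) / (n : ℝ) ^ (V i - 2)

/-- The Gibbs measure `p_n(X) = exp(H(X)) / Z_n`. -/
def gibbs {s : ℕ} (V : Fin s → ℕ) (Pt : ∀ i, Finset (EdgeK (V i))) (β : Fin s → ℝ)
    (n : ℕ) (X : Config n) : ℝ :=
  Real.exp (ergmH V Pt β n X) / ∑ Y : Config n, Real.exp (ergmH V Pt β n Y)

/-- `∂_e H(X) = H(X_{e+}) - H(X_{e-})`. -/
def dH {s : ℕ} (V : Fin s → ℕ) (Pt : ∀ i, Finset (EdgeK (V i))) (β : Fin s → ℝ)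
    (n : ℕ) (X : Config n) (e : EdgeK n) : ℝ :=
  ergmH V Pt β n (setEdge X e true) - ergmH V Pt β n (setEdge X e false)

/-- The transition kernel of the Glauber dynamics: a uniformly random edge `e` of `K_n` is
chosen and set present with probability `exp(∂_e H(X)) /(1 + exp(∂_e H(X)))`, absent
otherwise. -/
def glauber {s : ℕ} (V : Fin s → ℕ) (Pt : ∀ i, Finset (EdgeK (V i))) (β : Fin s → ℝ)
    (n : ℕ) (X Y : Config n) : ℝ :=
  ((n.choose 2 : ℝ))⁻¹ * ∑ e : EdgeK n,
    ((if Y = setEdge X e true then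
        Real.exp (dH V Pt β n X e) / (1 + Real.exp (dH V Pt β n X e)) else 0)
      + (if Y = setEdge X e false then 1 / (1 + Real.exp (dH V Pt β n X e)) else 0))

/-- The `t`-step distribution of the Markov chain with one-step kernel `K`,
started from a given state. -/
def kernelStep {n : ℕ} (K : Config n → Config n → ℝ) : ℕ → Config n → Config n → ℝ
  | 0 => fun x y => if y = x then 1 else 0
  | (t+1) => fun x y => ∑ z, kernelStep K t x z * K z y

/-- Total variation distance between two (signed) distributions on `Config n`. -/
def tvDist {n : ℕ} (μ ν : Config n → ℝ) : ℝ := (∑ Y, |μ Y - ν Y|) / 2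

/-- `mixes K π t` says that after `t` steps the chain with kernel `K` is within total
variation distance `e⁻¹` of `π` from every starting state. -/
def mixes {n : ℕ} (K : Config n → Config n → ℝ) (π : Config n → ℝ) (t : ℕ) : Prop :=
  ∀ x, tvDist (kernelStep K t x) π ≤ Real.exp (-1)

/-- The mixing time: the least `t` such that from every starting state the chain is within
total variation distance `e⁻¹` of `π`. -/
def mixingTime {n : ℕ} (K : Config n → Config n → ℝ) (π : Config n → ℝ) : ℕ :=
  sInf {t | mixes K π t}

/-- `Ψ(p) = ∑ i, 2 β_i |E_i| p^(|E_i| - 1)`. -/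
def PsiF {s : ℕ} {V : Fin s → ℕ} (Pt : ∀ i, Finset (EdgeK (V i))) (β : Fin s → ℝ)
    (p : ℝ) : ℝ :=
  ∑ i, 2 * β i * ((Pt i).card : ℝ) * p ^ ((Pt i).card - 1)

/-- `φ(p) = exp(Ψ(p)) / (1 + exp(Ψ(p)))`. -/
def phiF {s : ℕ} {V : Fin s → ℕ} (Pt : ∀ i, Finset (EdgeK (V i))) (β : Fin s → ℝ)
    (p : ℝ) : ℝ :=
  Real.exp (PsiF Pt β p) / (1 + Real.exp (PsiF Pt β p))

/-- High temperature phase: `φ(p) = p` has a unique solution `p*` (in `[0,1]`), which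
moreover satisfies `φ'(p*) < 1`. -/
def HighTemp {s : ℕ} {V : Fin s → ℕ} (Pt : ∀ i, Finset (EdgeK (V i))) (β : Fin s → ℝ)
    (pstar : ℝ) : Prop :=
  pstar ∈ Set.Icc (0:ℝ) 1 ∧ phiF Pt β pstar = pstar ∧
    (∀ q ∈ Set.Icc (0:ℝ) 1, phiF Pt β q = q → q = pstar) ∧
    deriv (phiF Pt β) pstar < 1

/-- Low temperature phase: `φ(p) = p` has at least two solutions `p` with `φ'(p) < 1`. -/
def LowTemp {s : ℕ} {V : Fin s → ℕ} (Pt : ∀ i, Finset (EdgeK (V i))) (β : Fin s → ℝ) : Prop :=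
  ∃ p₁ p₂ : ℝ, p₁ ∈ Set.Icc (0:ℝ) 1 ∧ p₂ ∈ Set.Icc (0:ℝ) 1 ∧ p₁ ≠ p₂ ∧
    phiF Pt β p₁ = p₁ ∧ phiF Pt β p₂ = p₂ ∧
    deriv (phiF Pt β) p₁ < 1 ∧ deriv (phiF Pt β) p₂ < 1

/-- `r_G(X, e) = (N_G(X,e) / (2 |E(G)| n^(|V(G)|-2)))^(1/(|E(G)|-1))`. -/
def rG {n m : ℕ} (X : Config n) (G : Finset (EdgeK m)) (e : EdgeK n) : ℝ :=
  ((rootedCount X G e : ℝ) / (2 * (G.card : ℝ) * (n : ℝ) ^ (m - 2))) ^ (((G.card : ℝ) - 1)⁻¹)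

/-- The set of values `r_G(X,e)` over all edges `e` of `K_n` and all graphs `G` on at
most `L` vertices with at least two edges. -/
def rSet (L n : ℕ) (X : Config n) : Set ℝ :=
  {r | ∃ m, m ≤ L ∧ ∃ G : Finset (EdgeK m), 2 ≤ G.card ∧ ∃ e : EdgeK n, r = rG X G e}

/-- `r̄(X)`: the maximum of `r_G(X,e)` over all edges `e` of `K_n` and all graphs `G` on
at most `L` vertices with at least two edges. -/
def rbar (L n : ℕ) (X : Config n) : ℝ := sSup (rSet L n X)

/-- `r_min(X)`: the corresponding minimum. -/
def rmin (L n : ℕ) (X : Config n) : ℝ := sInf (rSet L n X)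

/-- The cycle `C_l` on `l` labelled vertices, as a pattern graph. -/
def cyclePattern (l : ℕ) [NeZero l] : Finset (EdgeK l) :=
  univ.filter fun e => ∃ i : Fin l, e.1 = s(i, i + 1)

/-- The probability of a length-`T` trajectory `w` for the chain with kernel `K`
started at `x`. -/
def trajProb {n T : ℕ} (K : Config n → Config n → ℝ) (x : Config n)
    (w : Fin (T+1) → Config n) : ℝ :=
  (if w 0 = x then 1 else 0) * ∏ i : Fin T, K (w i.castSucc) (w i.succ)

/-- Two edges of `K_n` share a vertex. -/
def sharesVertex {n : ℕ} (e e' : EdgeK n) : Prop := ∃ v, v ∈ e.1 ∧ v ∈ e'.1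

end

/-!
By the FKG-type comparison of Holley, the Gibbs measure conditioned on all local fields
`∂_e H` being at most `u` is stochastically dominated by the Erdős–Rényi measure of density
`σ(u)`, where `σ` is the logistic function: resampling an edge then uses odds at most `exp u`.
Under that product measure the local fields concentrate around `Ψ(σ(u))`, by McDiarmid's
inequality. Hence if `Ψ(σ(u)) < u`, the conditioned measure gives mass at most `exp(-cn)` to the
configurations at which some local field is close to `u`, and a chain that changes `o(n)` edges
per step can leave the well `{X | ∀ e, ∂_e H(X) ≤ u}` only through such a configuration.
Symmetrically, `{X | ∀ e, w ≤ ∂_e H(X)}` is a well if `w < Ψ(σ(w))`. As `φ = σ ∘ Ψ`, two fixed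
points of `φ` with `φ' < 1` yield such a `u` just above the smaller one and such a `w` just below
the larger one; the two wells are disjoint, so one of them has mass at most `1/2`, and a chain
started in it needs exponential time to escape.
-/

section FiniteSums

variable {α : Type*} [Fintype α]

lemma sum_filter_exists_le {ι : Type*} [Fintype ι] {w : α → ℝ} (hw : 0 ≤ w)
    (P : ι → α → Prop) : ∑ x with ∃ i, P i x, w x ≤ ∑ i, ∑ x with P i x, w x := by
  simp only [sum_filter]
  rw [sum_comm]
  refine sum_le_sum fun x _ => ?_
  have hnonneg (i : ι) : 0 ≤ if P i x then w x else 0 := by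
    split_ifs
    exacts [hw x, le_rfl]
  split_ifs with hx
  · obtain ⟨i, hi⟩ := hx
    simpa [hi] using single_le_sum (fun i _ => hnonneg i) (mem_univ i)
  · exact sum_nonneg fun i _ => hnonneg i

lemma sum_le_half_or_sum_le_half {π : α → ℝ} (hπ : 0 ≤ π) (hπ1 : ∑ x, π x = 1)
    {A B : Finset α} (hAB : Disjoint A B) :
    ∑ x ∈ A, π x ≤ 1 / 2 ∨ ∑ x ∈ B, π x ≤ 1 / 2 := by
  have h := sum_le_univ_sum_of_nonneg (s := A.disjUnion B hAB) hπ
  rw [sum_disjUnion, hπ1] at h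
  by_contra! hlt
  linarith

end FiniteSums

section RealAnalysis

open Filter Topology

lemma tendsto_sq_mul_exp_neg {c : ℝ} (hc : 0 < c) :
    Tendsto (fun n : ℕ => (n : ℝ) ^ 2 * Real.exp (-(c * n))) atTop (𝓝 0) := by
  simpa [Function.comp_def] using (tendsto_rpow_mul_exp_neg_mul_atTop_nhds_zero 2 c hc).comp
    tendsto_natCast_atTop_atTop

lemma eventually_le_mul_of_tendsto_div_zero {f : ℕ → ℝ}
    (hf : Tendsto (fun n : ℕ => f n / n) atTop (𝓝 0)) {ε : ℝ} (hε : 0 < ε) :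
    ∀ᶠ n : ℕ in atTop, f n ≤ ε * n := by
  filter_upwards [hf.eventually_le_const hε, eventually_gt_atTop 0] with n hfn hn
  exact (div_le_iff₀ (Nat.cast_pos.mpr hn)).mp hfn

lemma eventually_lt_and_gt_of_deriv_lt_one {f : ℝ → ℝ} {p : ℝ} (hf : DifferentiableAt ℝ f p)
    (hp : f p = p) (hderiv : deriv f p < 1) :
    (∀ᶠ x in 𝓝[>] p, f x < x) ∧ ∀ᶠ x in 𝓝[<] p, x < f x := by
  have hpos : 0 < deriv (fun x => x - f x) p := by
    rw [((hasDerivAt_id' p).fun_sub hf.hasDerivAt).deriv]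
    exact sub_pos.mpr hderiv
  have hsign := eventually_nhdsWithin_sign_eq_of_deriv_pos hpos (sub_eq_zero.mpr hp.symm)
  constructor
  · filter_upwards [nhdsWithin_le_nhds hsign, self_mem_nhdsWithin] with x hx hpx
    rw [sign_pos (sub_pos.mpr (Set.mem_Ioi.mp hpx)), sign_eq_one_iff] at hx
    exact sub_pos.mp hx
  · filter_upwards [nhdsWithin_le_nhds hsign, self_mem_nhdsWithin] with x hx hxp
    rw [sign_neg (sub_neg.mpr (Set.mem_Iio.mp hxp)), sign_eq_neg_one_iff] at hx
    exact sub_neg.mp hx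

end RealAnalysis

open ProbabilityTheory in
/-- Hoeffding's lemma for a two-point distribution. -/
lemma bernoulli_exp_le {q : ℝ} (hq : q ∈ Set.Icc (0 : ℝ) 1) (x y : ℝ) :
    q * Real.exp x + (1 - q) * Real.exp y ≤
      Real.exp ((x - y) ^ 2 / 8) * Real.exp (q * x + (1 - q) * y) := by
  have hbound : ∀ᵐ z ∂bernoulliMeasure x y ⟨q, hq⟩, z ∈ Set.Icc (min x y) (max x y) :=
    MeasureTheory.ae_iff.mpr (bernoulliMeasure_apply_of_notMem_of_notMem _
      measurableSet_Icc.compl (by simp) (by simp))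
  have hmgf := (hasSubgaussianMGF_of_mem_Icc aemeasurable_id hbound).mgf_le 1
  set m := q * x + (1 - q) * y with hm
  have hoeffding : q * Real.exp (x - m) + (1 - q) * Real.exp (y - m) ≤
      Real.exp ((x - y) ^ 2 / 8) := by
    convert hmgf using 2
    · simp [mgf, integral_bernoulliMeasure, hm]
    · simp only [max_sub_min_eq_abs, NNReal.coe_pow, NNReal.coe_div, coe_nnnorm, Real.norm_eq_abs,
        abs_abs, NNReal.coe_ofNat, div_pow, sq_abs]
      ring
  rw [Real.exp_sub, Real.exp_sub, mul_div_assoc', mul_div_assoc', ← add_div] at hoeffding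
  exact (div_le_iff₀ (Real.exp_pos m)).mp hoeffding

section CoordAverage

variable {ι : Type*} [DecidableEq ι] {q : ℝ} {c : ι → ℝ} {f : (ι → Bool) → ℝ}

/-- The average of `F` over the `i`-th coordinate alone, which is `true` with probability `q`:
the conditional expectation of `F` given all other coordinates. -/
noncomputable def coordAverage (q : ℝ) (i : ι) (F : (ι → Bool) → ℝ) (X : ι → Bool) : ℝ :=
  q * F (Function.update X i true) + (1 - q) * F (Function.update X i false)

/-- The hypothesis of McDiarmid's inequality: flipping the `i`-th coordinate changes `f` by at
most `c i`. -/
def HasBoundedDifferences (f : (ι → Bool) → ℝ) (c : ι → ℝ) : Prop :=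
  ∀ X i, |f (Function.update X i true) - f (Function.update X i false)| ≤ c i

lemma HasBoundedDifferences.neg (hf : HasBoundedDifferences f c) :
    HasBoundedDifferences (fun X => -f X) c := fun X i => by
  rw [neg_sub_neg, abs_sub_comm]
  exact hf X i

lemma HasBoundedDifferences.abs_sub_update_le (hf : HasBoundedDifferences f c) (X : ι → Bool)
    (i : ι) (b : Bool) : |f X - f (Function.update X i b)| ≤ c i := by
  have hflip := hf X i
  have hX := Function.update_eq_self i X
  generalize X i = x at hX
  nth_rw 1 [← hX]
  cases x <;> cases b
  · simpa using (abs_nonneg _).trans hflip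
  · rwa [abs_sub_comm]
  · exact hflip
  · simpa using (abs_nonneg _).trans hflip

lemma HasBoundedDifferences.coordAverage (hf : HasBoundedDifferences f c)
    (hq : q ∈ Set.Icc (0 : ℝ) 1) (j : ι) : HasBoundedDifferences (coordAverage q j f) c := by
  intro X i
  rcases eq_or_ne i j with rfl | hij
  · simpa [_root_.coordAverage] using (abs_nonneg _).trans (hf X i)
  · simp only [_root_.coordAverage, Function.update_comm hij]
    have htrue := abs_le.mp (hf (Function.update X j true) i)
    have hfalse := abs_le.mp (hf (Function.update X j false) i)
    have hq0 := hq.1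
    have hq1 := sub_nonneg.mpr hq.2
    rw [abs_le]
    constructor <;> nlinarith

lemma coordAverage_exp_le (hf : HasBoundedDifferences f c) (hq : q ∈ Set.Icc (0 : ℝ) 1)
    (r : ℝ) (i : ι) (X : ι → Bool) :
    coordAverage q i (fun X => Real.exp (r * f X)) X ≤
      Real.exp (r ^ 2 * c i ^ 2 / 8) * Real.exp (r * coordAverage q i f X) := by
  refine (bernoulli_exp_le hq _ _).trans ?_
  have hsq : (f (Function.update X i true) - f (Function.update X i false)) ^ 2 ≤ c i ^ 2 :=
    sq_le_sq.mpr ((hf X i).trans (le_abs_self _))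
  refine mul_le_mul (Real.exp_le_exp.mpr ?_) (Real.exp_le_exp.mpr (le_of_eq ?_))
    (Real.exp_pos _).le (Real.exp_pos _).le
  · nlinarith [mul_le_mul_of_nonneg_left hsq (sq_nonneg r)]
  · simp only [coordAverage]; ring

lemma dependsOn_coordAverage {i : ι} {S : Finset ι}
    (hf : DependsOn f (insert i S : Finset ι)) : DependsOn (coordAverage q i f) S := by
  intro X Y h
  have hXY (b : Bool) : f (Function.update X i b) = f (Function.update Y i b) := by
    refine hf fun j hj => ?_
    rcases eq_or_ne j i with rfl | hji
    · simp
    · rw [Function.update_of_ne hji, Function.update_of_ne hji]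
      exact h j (by simpa [hji] using hj)
  simp only [coordAverage, hXY]

end CoordAverage

section BernoulliProduct

variable {ι : Type*} [Fintype ι] {q : ℝ}

/-- The probability of the configuration `X` under the product measure on `{0,1}^ι` whose
coordinates are independent and equal to `true` with probability `q`. -/
noncomputable def bernoulliWeight (q : ℝ) (X : ι → Bool) : ℝ := ∏ i, if X i then q else 1 - q

lemma bernoulliWeight_nonneg (hq : q ∈ Set.Icc (0 : ℝ) 1) (X : ι → Bool) :
    0 ≤ bernoulliWeight q X :=
  prod_nonneg fun i _ => by split_ifs <;> linarith [hq.1, hq.2]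

variable [DecidableEq ι]

lemma sum_bernoulliWeight (q : ℝ) : ∑ X : ι → Bool, bernoulliWeight q X = 1 := by
  have h := prod_univ_sum (fun _ : ι => (univ : Finset Bool)) fun _ b => if b then q else 1 - q
  rw [Fintype.piFinset_univ] at h
  simpa [bernoulliWeight] using h.symm

lemma bernoulliWeight_update_exchange (q : ℝ) (X : ι → Bool) (i : ι) :
    (1 - q) * bernoulliWeight q (Function.update X i true) =
      q * bernoulliWeight q (Function.update X i false) := by
  have h (b : Bool) : bernoulliWeight q (Function.update X i b) =
      (if b then q else 1 - q) * ∏ j ∈ {i}ᶜ, if X j then q else 1 - q := by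
    rw [bernoulliWeight, Fintype.prod_eq_mul_prod_compl i, Function.update_self]
    congr 1
    refine prod_congr rfl fun j hj => ?_
    rw [Function.update_of_ne (by simpa using hj)]
  rw [h, h]
  simp only [if_true, Bool.false_eq_true, if_false]
  ring

lemma bernoulliWeight_sigmoid_update_true (u : ℝ) (X : ι → Bool) (i : ι) :
    bernoulliWeight (Real.sigmoid u) (Function.update X i true) =
      Real.exp u * bernoulliWeight (Real.sigmoid u) (Function.update X i false) := by
  have hpos : 0 < 1 - Real.sigmoid u := sub_pos.mpr (Real.sigmoid_lt_one u)
  have hodds : Real.sigmoid u = Real.exp u * (1 - Real.sigmoid u) := by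
    rw [Real.sigmoid_def, Real.exp_neg]
    field_simp
    ring
  refine mul_left_cancel₀ hpos.ne' ?_
  rw [bernoulliWeight_update_exchange]
  nth_rw 1 [hodds]
  ring

lemma sum_update_add_update (F : (ι → Bool) → ℝ) (i : ι) :
    ∑ X, (F (Function.update X i true) + F (Function.update X i false)) = 2 * ∑ X, F X := by
  have flip_involutive :
      Function.Involutive fun X : ι → Bool => Function.update X i (!X i) := fun X => by simp
  have h (X : ι → Bool) : F (Function.update X i true) + F (Function.update X i false) =
      F X + F (Function.update X i (!X i)) := by
    have hX := Function.update_eq_self i X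
    cases hi : X i <;> rw [hi] at hX <;> simp only [hX, Bool.not_true, Bool.not_false, add_comm]
  simp_rw [h]
  rw [sum_add_distrib, flip_involutive.bijective.sum_comp F, two_mul]

lemma sum_bernoulliWeight_mul_coordAverage (q : ℝ) (i : ι) (F : (ι → Bool) → ℝ) :
    ∑ X, bernoulliWeight q X * coordAverage q i F X = ∑ X, bernoulliWeight q X * F X := by
  refine mul_left_cancel₀ (two_ne_zero' ℝ) ?_
  rw [← sum_update_add_update _ i, ← sum_update_add_update _ i]
  refine sum_congr rfl fun X _ => ?_
  simp only [coordAverage, Function.update_idem]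
  linear_combination (F (Function.update X i false) - F (Function.update X i true)) *
    bernoulliWeight_update_exchange q X i

lemma sum_bernoulliWeight_forall_mem (q : ℝ) (T : Finset ι) :
    ∑ X : ι → Bool with ∀ i ∈ T, X i, bernoulliWeight q X = q ^ #T := by
  simp_rw [sum_filter, ← mul_boole _ (bernoulliWeight q _)]
  induction T using Finset.induction_on with
  | empty => simp [sum_bernoulliWeight]
  | insert a T ha ih =>
    have h (X : ι → Bool) : coordAverage q a (fun X => if ∀ i ∈ insert a T, X i then 1 else 0) X =
        q * if ∀ i ∈ T, X i then 1 else 0 := by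
      have hT (b : Bool) : (∀ i ∈ T, Function.update X a b i) ↔ ∀ i ∈ T, X i :=
        forall₂_congr fun i hi => by rw [Function.update_of_ne (ne_of_mem_of_not_mem hi ha)]
      simp [coordAverage, hT]
    rw [← sum_bernoulliWeight_mul_coordAverage q a]
    simp_rw [h, mul_left_comm _ q]
    rw [← mul_sum, ih, card_insert_of_notMem ha, pow_succ']

end BernoulliProduct

section BoundedDifferences

variable {ι : Type*} [Fintype ι] [DecidableEq ι] {q : ℝ} {c : ι → ℝ} {f : (ι → Bool) → ℝ}

lemma HasBoundedDifferences.abs_sub_le (hf : HasBoundedDifferences f c) (X Y : ι → Bool) :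
    |f X - f Y| ≤ ∑ i with X i ≠ Y i, c i := by
  suffices H : ∀ S : Finset ι, |f X - f (S.piecewise Y X)| ≤ ∑ i ∈ S with X i ≠ Y i, c i by
    simpa using H univ
  intro S
  induction S using Finset.induction_on with
  | empty => simp
  | insert i S hi ih =>
    have hXi : S.piecewise Y X i = X i := piecewise_eq_of_notMem _ _ _ hi
    rw [piecewise_insert, filter_insert]
    split_ifs with hXY
    · rw [sum_insert (fun h => hi (mem_filter.mp h).1), add_comm]
      exact (_root_.abs_sub_le _ _ _).trans (add_le_add ih (hf.abs_sub_update_le _ i _))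
    · rwa [← not_not.mp hXY, ← hXi, Function.update_eq_self]

lemma sum_bernoulliWeight_mul_exp_le (hf : HasBoundedDifferences f c)
    (hq : q ∈ Set.Icc (0 : ℝ) 1) {S : Finset ι} (hS : DependsOn f S) (r : ℝ) :
    ∑ X, bernoulliWeight q X * Real.exp (r * f X) ≤
      Real.exp (r ^ 2 * (∑ i ∈ S, c i ^ 2) / 8) *
        Real.exp (r * ∑ X, bernoulliWeight q X * f X) := by
  induction S using Finset.induction_on generalizing f with
  | empty =>
    have hconst (X : ι → Bool) : f X = f fun _ => true := DependsOn.empty (by simpa using hS) _ _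
    simp_rw [hconst, ← sum_mul, sum_bernoulliWeight]
    simp
  | insert i S hi ih =>
    calc ∑ X, bernoulliWeight q X * Real.exp (r * f X)
        = ∑ X, bernoulliWeight q X * coordAverage q i (fun X => Real.exp (r * f X)) X :=
          (sum_bernoulliWeight_mul_coordAverage q i _).symm
      _ ≤ ∑ X, bernoulliWeight q X *
            (Real.exp (r ^ 2 * c i ^ 2 / 8) * Real.exp (r * coordAverage q i f X)) :=
          sum_le_sum fun X _ => mul_le_mul_of_nonneg_left
            (coordAverage_exp_le hf hq r i X) (bernoulliWeight_nonneg hq X)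
      _ = Real.exp (r ^ 2 * c i ^ 2 / 8) *
            ∑ X, bernoulliWeight q X * Real.exp (r * coordAverage q i f X) := by
          simp_rw [mul_left_comm _ (Real.exp (r ^ 2 * c i ^ 2 / 8)), ← mul_sum]
      _ ≤ Real.exp (r ^ 2 * c i ^ 2 / 8) * (Real.exp (r ^ 2 * (∑ i ∈ S, c i ^ 2) / 8) *
            Real.exp (r * ∑ X, bernoulliWeight q X * coordAverage q i f X)) :=
          mul_le_mul_of_nonneg_left (ih (hf.coordAverage hq i) (dependsOn_coordAverage hS))
            (Real.exp_pos _).le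
      _ = _ := by
          rw [sum_bernoulliWeight_mul_coordAverage, sum_insert hi, ← mul_assoc, ← Real.exp_add]
          ring_nf

/-- The upper half of McDiarmid's bounded differences inequality. -/
lemma sum_bernoulliWeight_upper_tail_le (hf : HasBoundedDifferences f c)
    (hq : q ∈ Set.Icc (0 : ℝ) 1) {W : ℝ} (hW : 0 < W) (hcW : ∑ i, c i ^ 2 ≤ W) {η : ℝ}
    (hη : 0 ≤ η) :
    ∑ X with ∑ Y, bernoulliWeight q Y * f Y + η ≤ f X, bernoulliWeight q X ≤
      Real.exp (-(2 * η ^ 2 / W)) := by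
  set m := ∑ Y, bernoulliWeight q Y * f Y
  -- The Chernoff exponent `r ^ 2 * W / 8 - r * η` is minimal at this `r`.
  set r := 4 * η / W with hr
  have hr0 : 0 ≤ r := by positivity
  have markov {X : ι → Bool} (hX : m + η ≤ f X) :
      1 ≤ Real.exp (-(r * (m + η))) * Real.exp (r * f X) := by
    rw [← Real.exp_add]
    exact Real.one_le_exp (by nlinarith)
  calc ∑ X with m + η ≤ f X, bernoulliWeight q X
      ≤ ∑ X with m + η ≤ f X,
          bernoulliWeight q X * (Real.exp (-(r * (m + η))) * Real.exp (r * f X)) :=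
        sum_le_sum fun X hX => le_mul_of_one_le_right (bernoulliWeight_nonneg hq X)
          (markov (mem_filter.mp hX).2)
    _ ≤ ∑ X, bernoulliWeight q X * (Real.exp (-(r * (m + η))) * Real.exp (r * f X)) :=
        sum_le_univ_sum_of_nonneg fun X => mul_nonneg (bernoulliWeight_nonneg hq X) (by positivity)
    _ = Real.exp (-(r * (m + η))) * ∑ X, bernoulliWeight q X * Real.exp (r * f X) := by
        simp_rw [mul_left_comm _ (Real.exp (-(r * (m + η)))), ← mul_sum]
    _ ≤ Real.exp (-(r * (m + η))) * (Real.exp (r ^ 2 * (∑ i, c i ^ 2) / 8) * Real.exp (r * m)) :=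
        mul_le_mul_of_nonneg_left
          (sum_bernoulliWeight_mul_exp_le hf hq (by simpa using dependsOn_univ f) r)
          (Real.exp_pos _).le
    _ ≤ Real.exp (-(2 * η ^ 2 / W)) := by
        rw [← Real.exp_add, ← Real.exp_add, Real.exp_le_exp]
        have hrW : r * W = 4 * η := by rw [hr]; field_simp
        have hexp : 2 * η ^ 2 / W = r * η / 2 := by rw [hr]; ring
        nlinarith [mul_le_mul_of_nonneg_left hcW (sq_nonneg r)]

/-- McDiarmid's bounded differences inequality. -/
lemma sum_bernoulliWeight_tail_le (hf : HasBoundedDifferences f c)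
    (hq : q ∈ Set.Icc (0 : ℝ) 1) {W : ℝ} (hW : 0 < W) (hcW : ∑ i, c i ^ 2 ≤ W) {η : ℝ}
    (hη : 0 ≤ η) :
    ∑ X with η ≤ |f X - ∑ Y, bernoulliWeight q Y * f Y|, bernoulliWeight q X ≤
      2 * Real.exp (-(2 * η ^ 2 / W)) := by
  set m := ∑ Y, bernoulliWeight q Y * f Y with hm
  have upper := sum_bernoulliWeight_upper_tail_le hf hq hW hcW hη
  have lower := sum_bernoulliWeight_upper_tail_le hf.neg hq hW hcW hη
  simp only [mul_neg, sum_neg_distrib, ← hm] at upper lower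
  have hsub : ({X | η ≤ |f X - m|} : Finset (ι → Bool)) ⊆
      ({X | m + η ≤ f X} : Finset _) ∪ ({X | -m + η ≤ -f X} : Finset _) := fun X hX => by
    simp only [mem_union, mem_filter_univ, le_abs] at hX ⊢
    exact hX.imp (by intro h; linarith) (by intro h; linarith)
  calc ∑ X with η ≤ |f X - m|, bernoulliWeight q X
      ≤ ∑ X with m + η ≤ f X, bernoulliWeight q X + ∑ X with -m + η ≤ -f X, bernoulliWeight q X :=
        (sum_le_sum_of_subset_of_nonneg hsub fun X _ _ => bernoulliWeight_nonneg hq X).trans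
          ((le_add_of_nonneg_right (sum_nonneg fun X _ => bernoulliWeight_nonneg hq X)).trans_eq
            sum_union_inter)
    _ ≤ _ := by rw [two_mul]; exact add_le_add upper lower

end BoundedDifferences

section Holley

variable {ι : Type*} [DecidableEq ι]

/-- The one-coordinate criterion under which the weight `g` stochastically dominates the weight
`f` on `{0,1}^ι`. -/
def HolleyCondition {R : Type*} [Mul R] [LE R] (f g : (ι → Bool) → R) : Prop :=
  ∀ X Y i, f (Function.update X i true) * g (Function.update Y i false) ≤
    f (Function.update X i false) * g (Function.update Y i true)

lemma HolleyCondition.mul_le_inf_mul_sup [Finite ι] {R : Type*} [Mul R] [Preorder R]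
    {f g : (ι → Bool) → R} (h : HolleyCondition f g) (X Y : ι → Bool) :
    f X * g Y ≤ f (X ⊓ Y) * g (X ⊔ Y) := by
  cases nonempty_fintype ι
  -- Replace `(X, Y)` by `(X ⊓ Y, X ⊔ Y)` one coordinate at a time.
  suffices H : ∀ S : Finset ι, f X * g Y ≤ f (S.piecewise (X ⊓ Y) X) * g (S.piecewise (X ⊔ Y) Y) by
    simpa using H univ
  intro S
  induction S using Finset.induction_on with
  | empty => simp
  | insert i S hi ih =>
    have hX : S.piecewise (X ⊓ Y) X i = X i := piecewise_eq_of_notMem _ _ _ hi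
    have hY : S.piecewise (X ⊔ Y) Y i = Y i := piecewise_eq_of_notMem _ _ _ hi
    set X' := S.piecewise (X ⊓ Y) X
    set Y' := S.piecewise (X ⊔ Y) Y
    rw [piecewise_insert, piecewise_insert, Pi.inf_apply, Pi.sup_apply]
    refine ih.trans ?_
    by_cases hXY : X i = true ∧ Y i = false
    · have := h X' Y' i
      rw [← hXY.1, ← hX, Function.update_eq_self, hX, hXY.1, ← hXY.2, ← hY,
        Function.update_eq_self, hY, hXY.2] at this
      simpa [hXY.1, hXY.2] using this
    · have hinf : X i ⊓ Y i = X' i := by rw [hX]; revert hXY; cases X i <;> cases Y i <;> simp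
      have hsup : X i ⊔ Y i = Y' i := by rw [hY]; revert hXY; cases X i <;> cases Y i <;> simp
      rw [hinf, hsup, Function.update_eq_self, Function.update_eq_self]

variable [Fintype ι] {f g : (ι → Bool) → ℝ} {P : (ι → Bool) → Prop} [DecidablePred P]

lemma HolleyCondition.sum_filter_mul_sum_le (h : HolleyCondition f g) (hf : 0 ≤ f)
    (hg : 0 ≤ g) (hP : Monotone P) :
    (∑ X with P X, f X) * ∑ X, g X ≤ (∑ X, f X) * ∑ X with P X, g X := by
  rw [sum_filter, sum_filter]
  refine four_functions_theorem_univ _ _ _ _ (fun X => ?_) hg hf (fun X => ?_) fun X Y => ?_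
  · dsimp only; split_ifs <;> [exact hf X; exact le_rfl]
  · dsimp only; split_ifs <;> [exact hg X; exact le_rfl]
  · by_cases hX : P X
    · rw [if_pos hX, if_pos (hP le_sup_left hX)]
      exact h.mul_le_inf_mul_sup X Y
    · rw [if_neg hX, zero_mul]
      exact mul_nonneg (hf _) (by split_ifs <;> [exact hg _; exact le_rfl])

lemma HolleyCondition.sum_mul_sum_filter_le (h : HolleyCondition f g) (hf : 0 ≤ f)
    (hg : 0 ≤ g) (hP : Antitone P) :
    (∑ X, f X) * ∑ X with P X, g X ≤ (∑ X with P X, f X) * ∑ X, g X := by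
  rw [sum_filter, sum_filter]
  refine four_functions_theorem_univ _ _ _ _ hf (fun X => ?_) (fun X => ?_) hg fun X Y => ?_
  · dsimp only; split_ifs <;> [exact hg X; exact le_rfl]
  · dsimp only; split_ifs <;> [exact hf X; exact le_rfl]
  · by_cases hY : P Y
    · rw [if_pos hY, if_pos (hP inf_le_right hY)]
      exact h.mul_le_inf_mul_sup X Y
    · rw [if_neg hY, mul_zero]
      exact mul_nonneg (by split_ifs <;> [exact hf _; exact le_rfl]) (hg _)

end Holley

section Bottleneck

open Matrix

variable {α : Type*} [Fintype α] [DecidableEq α] {M : Matrix α α ℝ} {π : α → ℝ}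

lemma vecMul_pow_eq_self (h : π ᵥ* M = π) (t : ℕ) : π ᵥ* M ^ t = π := by
  induction t with
  | zero => simp
  | succ t ih => rw [pow_succ', ← vecMul_vecMul, h, ih]

lemma sum_compl_pow_succ_le (hM : M ∈ rowStochastic ℝ α) {A D : Finset α}
    (hD : ∀ x ∈ A, x ∉ D → ∀ y ∉ A, M x y = 0) (t : ℕ) (x : α) :
    ∑ y ∈ Aᶜ, (M ^ (t + 1)) x y ≤ ∑ y ∈ Aᶜ, (M ^ t) x y + ∑ z ∈ D, (M ^ t) x z := by
  have hpow (z : α) : 0 ≤ (M ^ t) x z := nonneg_of_mem_rowStochastic (pow_mem hM t)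
  have escape (z : α) :
      ∑ y ∈ Aᶜ, M z y ≤ (if z ∈ Aᶜ then 1 else 0) + if z ∈ D then 1 else 0 := by
    by_cases hz : z ∈ A ∧ z ∉ D
    · rw [sum_eq_zero fun y hy => hD z hz.1 hz.2 y (mem_compl.mp hy)]
      positivity
    · have hle : ∑ y ∈ Aᶜ, M z y ≤ 1 :=
        (sum_le_univ_sum_of_nonneg fun y => nonneg_of_mem_rowStochastic hM).trans_eq
          (sum_row_of_mem_rowStochastic hM z)
      refine hle.trans ?_
      by_cases hzA : z ∈ A <;> by_cases hzD : z ∈ D <;> simp_all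
  calc ∑ y ∈ Aᶜ, (M ^ (t + 1)) x y
      = ∑ z, (M ^ t) x z * ∑ y ∈ Aᶜ, M z y := by
        simp_rw [pow_succ, mul_apply, mul_sum]
        exact sum_comm
    _ ≤ ∑ z, (M ^ t) x z * ((if z ∈ Aᶜ then 1 else 0) + if z ∈ D then 1 else 0) :=
        sum_le_sum fun z _ => mul_le_mul_of_nonneg_left (escape z) (hpow z)
    _ = _ := by simp only [mul_add, sum_add_distrib, mul_boole, sum_ite_mem, univ_inter]

lemma sum_mul_sum_compl_pow_le (hM : M ∈ rowStochastic ℝ α) (hπ : 0 ≤ π) (hπM : π ᵥ* M = π)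
    {A D : Finset α} (hD : ∀ x ∈ A, x ∉ D → ∀ y ∉ A, M x y = 0) (t : ℕ) :
    ∑ x ∈ A, π x * ∑ y ∈ Aᶜ, (M ^ t) x y ≤ t * ∑ x ∈ D, π x := by
  induction t with
  | zero =>
    refine le_of_eq ?_
    rw [Nat.cast_zero, zero_mul]
    refine sum_eq_zero fun x hx => mul_eq_zero_of_right _ (sum_eq_zero fun y hy => ?_)
    rw [pow_zero, one_apply_ne (ne_of_mem_of_not_mem hx (mem_compl.mp hy))]
  | succ t ih =>
    have visit : ∑ x ∈ A, π x * ∑ z ∈ D, (M ^ t) x z ≤ ∑ z ∈ D, π z := by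
      simp_rw [mul_sum]
      rw [sum_comm]
      refine sum_le_sum fun z _ => ?_
      refine (sum_le_univ_sum_of_nonneg fun x =>
        mul_nonneg (hπ x) (nonneg_of_mem_rowStochastic (pow_mem hM t))).trans_eq ?_
      exact congrFun (vecMul_pow_eq_self hπM t) z
    calc ∑ x ∈ A, π x * ∑ y ∈ Aᶜ, (M ^ (t + 1)) x y
        ≤ ∑ x ∈ A, π x * (∑ y ∈ Aᶜ, (M ^ t) x y + ∑ z ∈ D, (M ^ t) x z) :=
          sum_le_sum fun x _ => mul_le_mul_of_nonneg_left (sum_compl_pow_succ_le hM hD t x) (hπ x)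
      _ = ∑ x ∈ A, π x * ∑ y ∈ Aᶜ, (M ^ t) x y + ∑ x ∈ A, π x * ∑ z ∈ D, (M ^ t) x z := by
          simp_rw [mul_add, sum_add_distrib]
      _ ≤ t * ∑ x ∈ D, π x + ∑ x ∈ D, π x := add_le_add ih visit
      _ = _ := by push_cast; ring

end Bottleneck

section MixingTime

open Matrix

variable {n : ℕ} {K : Config n → Config n → ℝ} {π : Config n → ℝ}

lemma kernelStep_eq_pow (K : Config n → Config n → ℝ) (t : ℕ) (X Y : Config n) :
    kernelStep K t X Y = (Matrix.of K ^ t) X Y := by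
  induction t generalizing Y with
  | zero => simp [kernelStep, one_apply, eq_comm]
  | succ t ih => simp [kernelStep, pow_succ, mul_apply, ih]

lemma sum_sub_sum_le_tvDist {μ ν : Config n → ℝ} (h : ∑ X, μ X = ∑ X, ν X)
    (A : Finset (Config n)) : ∑ X ∈ A, ν X - ∑ X ∈ A, μ X ≤ tvDist μ ν := by
  have hin : ∑ X ∈ A, ν X - ∑ X ∈ A, μ X ≤ ∑ X ∈ A, |μ X - ν X| := by
    rw [← sum_sub_distrib]
    exact sum_le_sum fun X _ => abs_sub_comm (μ X) (ν X) ▸ le_abs_self _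
  have hout : ∑ X ∈ Aᶜ, μ X - ∑ X ∈ Aᶜ, ν X ≤ ∑ X ∈ Aᶜ, |μ X - ν X| := by
    rw [← sum_sub_distrib]
    exact sum_le_sum fun X _ => le_abs_self _
  rw [← sum_add_sum_compl A μ, ← sum_add_sum_compl A ν] at h
  rw [tvDist, ← sum_add_sum_compl A fun X => |μ X - ν X|]
  linarith

/-- `K` is the kernel of a Markov chain with stationary distribution `π` none of whose steps
changes more than `r` edges. -/
structure IsLocalChain (K : Config n → Config n → ℝ) (π : Config n → ℝ) (r : ℝ) : Prop where
  nonneg : ∀ X Y, 0 ≤ K X Y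
  sum_eq_one : ∀ X, ∑ Y, K X Y = 1
  stationary : ∀ Y, ∑ X, π X * K X Y = π Y
  hamDist_le : ∀ X Y, K X Y ≠ 0 → (hamDist X Y : ℝ) ≤ r

lemma IsLocalChain.mono {r r' : ℝ} (hK : IsLocalChain K π r) (hr : r ≤ r') :
    IsLocalChain K π r' :=
  { hK with hamDist_le := fun X Y h => (hK.hamDist_le X Y h).trans hr }

/-- The configurations of `A` from which `A` can be left by changing at most `r` edges. -/
noncomputable def innerBoundary (A : Finset (Config n)) (r : ℝ) : Finset (Config n) :=
  {X ∈ A | ∃ Y ∉ A, (hamDist X Y : ℝ) ≤ r}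

lemma IsLocalChain.not_mixes {r : ℝ} (hK : IsLocalChain K π r) (hπ : 0 ≤ π)
    (hπ1 : ∑ X, π X = 1) {A : Finset (Config n)} {δ : ℝ} {t : ℕ} (hA : 0 < ∑ X ∈ A, π X)
    (hA2 : ∑ X ∈ A, π X ≤ 1 / 2)
    (hδ : ∑ X ∈ innerBoundary A r, π X ≤ δ * ∑ X ∈ A, π X)
    (ht : t * δ < 1 / 2 - Real.exp (-1)) : ¬ mixes K π t := by
  intro hmix
  have hM : Matrix.of K ∈ rowStochastic ℝ (Config n) :=
    mem_rowStochastic_iff_sum.mpr ⟨hK.nonneg, hK.sum_eq_one⟩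
  have hD (X) (hX : X ∈ A) (hXD : X ∉ innerBoundary A r) (Y) (hY : Y ∉ A) : K X Y = 0 := by
    by_contra hXY
    exact hXD (mem_filter.mpr ⟨hX, Y, hY, hK.hamDist_le X Y hXY⟩)
  have escape (X : Config n) : 1 / 2 - Real.exp (-1) ≤ ∑ Y ∈ Aᶜ, (Matrix.of K ^ t) X Y := by
    have htotal : ∑ Y, kernelStep K t X Y = ∑ Y, π Y := by
      simp_rw [kernelStep_eq_pow, hπ1]
      exact sum_row_of_mem_rowStochastic (pow_mem hM t) X
    have htv := (sum_sub_sum_le_tvDist htotal Aᶜ).trans (hmix X)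
    simp_rw [kernelStep_eq_pow] at htv
    linarith [sum_add_sum_compl A π]
  have hflow : (∑ X ∈ A, π X) * (1 / 2 - Real.exp (-1)) ≤ t * (δ * ∑ X ∈ A, π X) :=
    calc (∑ X ∈ A, π X) * (1 / 2 - Real.exp (-1))
        ≤ ∑ X ∈ A, π X * ∑ Y ∈ Aᶜ, (Matrix.of K ^ t) X Y := by
          rw [sum_mul]
          exact sum_le_sum fun X _ => mul_le_mul_of_nonneg_left (escape X) (hπ X)
      _ ≤ t * ∑ X ∈ innerBoundary A r, π X :=
          sum_mul_sum_compl_pow_le hM hπ (funext hK.stationary) hD t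
      _ ≤ t * (δ * ∑ X ∈ A, π X) := mul_le_mul_of_nonneg_left hδ t.cast_nonneg
  nlinarith

end MixingTime

section EmbeddingCounts

lemma card_mul_pow_le_of_forall_exists {α β : Type*} [Fintype α] [Fintype β] {S : Finset (α ↪ β)}
    {T : Finset β} (hST : ∀ v ∈ S, ∀ b ∈ T, ∃ a, v a = b) :
    #S * Fintype.card β ^ #T ≤ Fintype.card α ^ #T * Fintype.card β ^ Fintype.card α := by
  -- A pair `(v, y)` is recovered from the preimages of `T` and from `v` overwritten by `y` there.
  let recode (p : S × (T → β)) : (T → α) × (α → β) :=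
    (fun b => (hST p.1 p.1.2 b b.2).choose,
      fun a => if h : p.1.1 a ∈ T then p.2 ⟨p.1.1 a, h⟩ else p.1.1 a)
  have recode_injective : Function.Injective recode := by
    rintro ⟨⟨v, hv⟩, y⟩ ⟨⟨w, hw⟩, z⟩ h
    obtain ⟨hpre, hval⟩ := Prod.ext_iff.mp h
    have hpre (b : T) : ∃ a, v a = b ∧ w a = b :=
      ⟨_, (hST v hv b b.2).choose_spec,
        (congrArg w (congrFun hpre b)).trans (hST w hw b b.2).choose_spec⟩
    have hyz : y = z := funext fun b => by
      obtain ⟨a, hva, hwa⟩ := hpre b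
      simpa [recode, hva, hwa] using congrFun hval a
    have hw_of_hv {a : α} (ha : v a ∈ T) : w a = v a := by
      obtain ⟨a', hva', hwa'⟩ := hpre ⟨_, ha⟩
      rw [← v.injective hva', hwa', hva']
    have hv_of_hw {a : α} (ha : w a ∈ T) : w a = v a := by
      obtain ⟨a', hva', hwa'⟩ := hpre ⟨_, ha⟩
      rw [← w.injective hwa', hwa', hva']
    have hvw : v = w := Function.Embedding.ext fun a => by
      by_cases hva : v a ∈ T
      · exact (hw_of_hv hva).symm
      by_cases hwa : w a ∈ T
      · exact (hv_of_hw hwa).symm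
      simpa [recode, hva, hwa] using congrFun hval a
    subst hvw hyz
    rfl
  simpa using Fintype.card_le_of_injective recode recode_injective

variable {m n : ℕ}

lemma mapEdge_injective (v : Fin m ↪ Fin n) : Function.Injective (mapEdge v) := fun _ _ h =>
  Subtype.ext (Sym2.map.injective v.injective (congrArg Subtype.val h))

/-- The edge set of the copy of the pattern `G` placed in `K_n` by the injection `v`. -/
noncomputable def copyImage (v : Fin m ↪ Fin n) (G : Finset (EdgeK m)) : Finset (EdgeK n) :=
  G.map ⟨mapEdge v, mapEdge_injective v⟩

lemma card_copyImage (v : Fin m ↪ Fin n) (G : Finset (EdgeK m)) : #(copyImage v G) = #G :=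
  card_map _

lemma mem_copyImage {v : Fin m ↪ Fin n} {G : Finset (EdgeK m)} {e : EdgeK n} :
    e ∈ copyImage v G ↔ ∃ a ∈ G, mapEdge v a = e := by
  simp [copyImage]

lemma forall_mem_copyImage {v : Fin m ↪ Fin n} {G : Finset (EdgeK m)} {P : EdgeK n → Prop} :
    (∀ e ∈ copyImage v G, P e) ↔ ∀ a ∈ G, P (mapEdge v a) := by
  simp_rw [mem_copyImage, forall_exists_index, and_imp]
  exact ⟨fun h a ha => h _ a ha rfl, fun h _ a ha hae => hae ▸ h a ha⟩

lemma exists_apply_eq_of_mem_copyImage {v : Fin m ↪ Fin n} {G : Finset (EdgeK m)} {e : EdgeK n}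
    (he : e ∈ copyImage v G) {x : Fin n} (hx : x ∈ e.1) : ∃ i, v i = x := by
  obtain ⟨a, -, rfl⟩ := mem_copyImage.mp he
  obtain ⟨i, -, hi⟩ := Sym2.mem_map.mp hx
  exact ⟨i, hi⟩

/-- The number of copies of `G` in `K_n` that use the edge `e`. -/
noncomputable def hitCount (G : Finset (EdgeK m)) (e : EdgeK n) : ℕ :=
  #{v : Fin m ↪ Fin n | e ∈ copyImage v G}

/-- The number of copies of `G` in `K_n` that use the edge `e` and, as another edge, `f`. -/
noncomputable def pairCount (G : Finset (EdgeK m)) (e f : EdgeK n) : ℕ :=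
  #{v : Fin m ↪ Fin n | e ∈ copyImage v G ∧ f ∈ (copyImage v G).erase e}

lemma hitCount_mul_sq_le (G : Finset (EdgeK m)) (e : EdgeK n) :
    hitCount G e * n ^ 2 ≤ m ^ 2 * n ^ m := by
  have h := card_mul_pow_le_of_forall_exists (S := {v : Fin m ↪ Fin n | e ∈ copyImage v G})
    (T := e.1.toFinset) fun v hv x hx =>
      exists_apply_eq_of_mem_copyImage (mem_filter.mp hv).2 (Sym2.mem_toFinset.mp hx)
  rwa [Sym2.card_toFinset_of_not_isDiag _ e.2, Fintype.card_fin, Fintype.card_fin] at h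

lemma exists_mem_notMem_of_ne {e f : EdgeK n} (h : e ≠ f) : ∃ x ∈ f.1, x ∉ e.1 := by
  by_contra! hsub
  refine h (Subtype.ext (Sym2.ext fun x => ?_))
  have hle : f.1.toFinset ⊆ e.1.toFinset := fun x hx =>
    Sym2.mem_toFinset.mpr (hsub x (Sym2.mem_toFinset.mp hx))
  have heq := eq_of_subset_of_card_le hle
    (by simp only [Sym2.card_toFinset_of_not_isDiag _ e.2, Sym2.card_toFinset_of_not_isDiag _ f.2,
      le_refl])
  rw [← Sym2.mem_toFinset, ← heq, Sym2.mem_toFinset]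

lemma pairCount_mul_cube_le (G : Finset (EdgeK m)) (e f : EdgeK n) :
    pairCount G e f * n ^ 3 ≤ m ^ 3 * n ^ m := by
  rcases eq_or_ne e f with rfl | hef
  · simp [pairCount]
  obtain ⟨x, hxf, hxe⟩ := exists_mem_notMem_of_ne hef
  have h := card_mul_pow_le_of_forall_exists
    (S := {v : Fin m ↪ Fin n | e ∈ copyImage v G ∧ f ∈ (copyImage v G).erase e})
    (T := insert x e.1.toFinset) fun v hv => by
      rw [mem_filter_univ] at hv
      exact (forall_mem_insert _ _ _).mpr
        ⟨exists_apply_eq_of_mem_copyImage (mem_of_mem_erase hv.2) hxf,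
          fun y hy => exists_apply_eq_of_mem_copyImage hv.1 (Sym2.mem_toFinset.mp hy)⟩
  rwa [card_insert_of_notMem (mt Sym2.mem_toFinset.mp hxe), Sym2.card_toFinset_of_not_isDiag _ e.2,
    Fintype.card_fin, Fintype.card_fin] at h

lemma sum_pairCount (G : Finset (EdgeK m)) (e : EdgeK n) :
    ∑ f, pairCount G e f = (#G - 1) * hitCount G e := by
  have h := sum_card_bipartiteAbove_eq_sum_card_bipartiteBelow (s := univ)
    (t := ({v | e ∈ copyImage v G} : Finset (Fin m ↪ Fin n)))
    fun (f : EdgeK n) v => f ∈ (copyImage v G).erase e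
  simp only [bipartiteAbove, bipartiteBelow, filter_filter, filter_univ_mem] at h
  rw [hitCount, mul_comm, ← smul_eq_mul, ← sum_const]
  refine h.trans (sum_congr rfl fun v hv => ?_)
  rw [card_erase_of_mem (mem_filter.mp hv).2, card_copyImage]

lemma exists_perm_mapEdge_eq (e f : EdgeK n) :
    ∃ σ : Equiv.Perm (Fin n), mapEdge σ.toEmbedding e = f := by
  obtain ⟨e, he⟩ := e
  obtain ⟨f, hf⟩ := f
  induction e with | _ a b
  induction f with | _ c d
  obtain ⟨σ, hac, hbd⟩ := MulAction.is_two_pretransitive_iff.mp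
    (Equiv.Perm.isMultiplyPretransitive (Fin n) 2) (mt Sym2.mk_isDiag_iff.mpr he)
    (mt Sym2.mk_isDiag_iff.mpr hf)
  exact ⟨σ, Subtype.ext (congrArg₂ (fun x y => s(x, y)) hac hbd)⟩

lemma hitCount_eq_hitCount (G : Finset (EdgeK m)) (e f : EdgeK n) :
    hitCount G e = hitCount G f := by
  obtain ⟨σ, rfl⟩ := exists_perm_mapEdge_eq e f
  refine card_equiv ((Equiv.refl _).embeddingCongr σ) fun v => ?_
  have hcomp (a : EdgeK m) :
      mapEdge ((Equiv.refl _).embeddingCongr σ v) a = mapEdge σ.toEmbedding (mapEdge v a) :=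
    Subtype.ext (Sym2.map_map (g := σ) (f := v) a.1).symm
  simp only [mem_filter_univ, mem_copyImage, hcomp, (mapEdge_injective σ.toEmbedding).eq_iff]

lemma card_edgeK (n : ℕ) : Fintype.card (EdgeK n) = n.choose 2 := by
  rw [Sym2.card_subtype_not_diag, Fintype.card_fin]

lemma hitCount_mul_choose (G : Finset (EdgeK m)) (e : EdgeK n) :
    hitCount G e * n.choose 2 = #G * n.descFactorial m := by
  have h := sum_card_bipartiteAbove_eq_sum_card_bipartiteBelow (s := univ) (t := univ)
    fun (f : EdgeK n) (v : Fin m ↪ Fin n) => f ∈ copyImage v G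
  simp only [bipartiteAbove, bipartiteBelow, filter_univ_mem, card_copyImage] at h
  calc hitCount G e * n.choose 2 = ∑ f : EdgeK n, hitCount G f := by
        rw [sum_congr rfl fun f _ => hitCount_eq_hitCount G f e, sum_const, card_univ, card_edgeK,
          smul_eq_mul, mul_comm]
    _ = ∑ _ : Fin m ↪ Fin n, #G := h
    _ = #G * n.descFactorial m := by
        rw [sum_const, card_univ, Fintype.card_embedding_eq, Fintype.card_fin, Fintype.card_fin,
          mul_comm, smul_eq_mul]

lemma pos_of_edge (e : EdgeK n) : 0 < n := Fin.pos e.1.out.1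

lemma hitCount_div_le (hm : 2 ≤ m) (G : Finset (EdgeK m)) (e : EdgeK n) :
    (hitCount G e : ℝ) / n ^ (m - 2) ≤ m ^ 2 := by
  have hn : (0 : ℝ) < n := by exact_mod_cast pos_of_edge e
  rw [div_le_iff₀ (by positivity)]
  refine le_of_mul_le_mul_right ?_ (pow_pos hn 2)
  rw [mul_assoc, ← pow_add, Nat.sub_add_cancel hm]
  exact_mod_cast hitCount_mul_sq_le G e

lemma pairCount_div_le (hm : 2 ≤ m) (G : Finset (EdgeK m)) (e f : EdgeK n) :
    (pairCount G e f : ℝ) / n ^ (m - 2) ≤ m ^ 3 / n := by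
  have hn : (0 : ℝ) < n := by exact_mod_cast pos_of_edge e
  rw [div_le_div_iff₀ (by positivity) hn]
  refine le_of_mul_le_mul_right ?_ (pow_pos hn 2)
  rw [mul_assoc, mul_assoc, ← pow_succ', ← pow_add, Nat.sub_add_cancel hm]
  exact_mod_cast pairCount_mul_cube_le G e f

end EmbeddingCounts

section RootedCount

variable {m n : ℕ}

lemma setEdge_eq_update (X : Config n) (e : EdgeK n) (b : Bool) :
    setEdge X e b = Function.update X e b := by
  ext f
  simp [setEdge, Function.update_apply]

lemma copyCount_eq_card (X : Config n) (G : Finset (EdgeK m)) :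
    copyCount X G = #{v : Fin m ↪ Fin n | ∀ f ∈ copyImage v G, X f} :=
  congrArg card (filter_congr fun _ _ =>
    (forall_mem_copyImage (P := fun f => X f = true)).symm)

lemma rootedCount_eq_card (X : Config n) (G : Finset (EdgeK m)) (e : EdgeK n) :
    rootedCount X G e =
      #{v : Fin m ↪ Fin n | e ∈ copyImage v G ∧ ∀ f ∈ (copyImage v G).erase e, X f} := by
  refine congrArg card (filter_congr fun v _ => ?_)
  have h (f : EdgeK n) : addEdge X e f = true ↔ (f ≠ e → X f = true) := by
    by_cases hf : f = e <;> simp [addEdge, hf]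
  rw [← mem_copyImage, ← forall_mem_copyImage (P := fun f => addEdge X e f = true)]
  simp only [h, mem_erase, and_imp, forall_comm (α := _ ∈ copyImage v G)]

lemma copyCount_update_true (X : Config n) (G : Finset (EdgeK m)) (e : EdgeK n) :
    copyCount (Function.update X e true) G =
      copyCount (Function.update X e false) G + rootedCount X G e := by
  simp only [copyCount_eq_card, rootedCount_eq_card]
  rw [← card_filter_add_card_filter_not (fun v : Fin m ↪ Fin n => e ∈ copyImage v G), add_comm]
  simp only [filter_filter]
  congr 3 <;> ext v
  · refine ⟨fun ⟨h, he⟩ f hf => ?_, fun h => ?_⟩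
    · have hfe : f ≠ e := ne_of_mem_of_not_mem hf he
      simpa [hfe] using h f hf
    · have he : e ∉ copyImage v G := fun he => by simpa using h e he
      refine ⟨fun f hf => ?_, he⟩
      have hfe : f ≠ e := ne_of_mem_of_not_mem hf he
      simpa [hfe] using h f hf
  · rw [and_comm]
    refine and_congr_right fun _ => ⟨fun h f hf => ?_, fun h f hf => ?_⟩
    · simpa [(mem_erase.mp hf).1] using h f (mem_of_mem_erase hf)
    · rcases eq_or_ne f e with rfl | hfe
      · simp
      · simpa [hfe] using h f (mem_erase.mpr ⟨hfe, hf⟩)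

lemma rootedCount_mono (G : Finset (EdgeK m)) (e : EdgeK n) :
    Monotone fun X : Config n => rootedCount X G e := fun X Y hXY => by
  simp only [rootedCount_eq_card]
  refine card_le_card (monotone_filter_right _ fun v _ hv => ⟨hv.1, fun f hf => ?_⟩)
  exact Bool.eq_true_of_true_le (hv.2 f hf ▸ hXY f)

lemma rootedCount_eq_hitCount (X : Config n) {G : Finset (EdgeK m)} (hG : #G ≤ 1) (e : EdgeK n) :
    rootedCount X G e = hitCount G e := by
  rw [rootedCount_eq_card]
  refine congrArg card (filter_congr fun v _ => and_iff_left_of_imp fun he f hf => ?_)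
  exact absurd (card_le_one.mp ((card_copyImage v G).trans_le hG) _ (mem_of_mem_erase hf) _ he)
    (ne_of_mem_erase hf)

lemma hasBoundedDifferences_rootedCount (G : Finset (EdgeK m)) (e : EdgeK n) :
    HasBoundedDifferences (fun X : Config n => (rootedCount X G e : ℝ))
      fun f => pairCount G e f := by
  intro X f
  have hmono : Function.update X f false ≤ Function.update X f true :=
    update_le_update_iff.mpr ⟨Bool.false_le _, fun _ _ => le_rfl⟩
  have hle : rootedCount (Function.update X f true) G e ≤
      rootedCount (Function.update X f false) G e + pairCount G e f := by
    simp only [rootedCount_eq_card, pairCount]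
    refine (card_le_card fun v hv => ?_).trans (card_union_le _ _)
    simp only [mem_union, mem_filter_univ] at hv ⊢
    by_cases hf : f ∈ (copyImage v G).erase e
    · exact .inr ⟨hv.1, hf⟩
    · refine .inl ⟨hv.1, fun g hg => ?_⟩
      have hgf : g ≠ f := ne_of_mem_of_not_mem hg hf
      simpa [hgf] using hv.2 g hg
  rw [abs_of_nonneg (sub_nonneg.mpr (Nat.cast_le.mpr (rootedCount_mono G e hmono))),
    sub_le_iff_le_add']
  simp only
  exact_mod_cast hle

lemma sum_bernoulliWeight_mul_rootedCount (q : ℝ) (G : Finset (EdgeK m)) (e : EdgeK n) :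
    ∑ X, bernoulliWeight q X * rootedCount X G e = hitCount G e * q ^ (#G - 1) := by
  have h (X : Config n) : (rootedCount X G e : ℝ) =
      ∑ v : Fin m ↪ Fin n with e ∈ copyImage v G,
        if ∀ f ∈ (copyImage v G).erase e, X f then 1 else 0 := by
    rw [rootedCount_eq_card, ← filter_filter, sum_boole]
  simp_rw [h, mul_sum, mul_boole]
  rw [sum_comm, hitCount, ← nsmul_eq_mul, ← sum_const]
  refine sum_congr rfl fun v hv => ?_
  rw [← sum_filter, sum_bernoulliWeight_forall_mem, card_erase_of_mem (mem_filter.mp hv).2,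
    card_copyImage]

end RootedCount

section LocalField

variable {s : ℕ} {V : Fin s → ℕ} {Pt : ∀ i, Finset (EdgeK (V i))} {β : Fin s → ℝ} {n : ℕ}

lemma dH_eq_sum (X : Config n) (e : EdgeK n) :
    dH V Pt β n X e = ∑ i, β i * rootedCount X (Pt i) e / (n : ℝ) ^ (V i - 2) := by
  simp only [dH, ergmH, setEdge_eq_update, copyCount_update_true, ← sum_sub_distrib, Nat.cast_add]
  exact sum_congr rfl fun i _ => by ring

lemma dH_update_self (X : Config n) (e : EdgeK n) (b : Bool) :
    dH V Pt β n (Function.update X e b) e = dH V Pt β n X e := by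
  simp only [dH, setEdge_eq_update, Function.update_idem]

lemma monotone_dH (hβ : ∀ i, 1 < #(Pt i) → 0 ≤ β i) (e : EdgeK n) :
    Monotone fun X : Config n => dH V Pt β n X e := fun X Y hXY => by
  simp only [dH_eq_sum]
  refine sum_le_sum fun i _ => div_le_div_of_nonneg_right ?_ (by positivity)
  rcases le_or_gt #(Pt i) 1 with hi | hi
  · rw [rootedCount_eq_hitCount X hi, rootedCount_eq_hitCount Y hi]
  · exact mul_le_mul_of_nonneg_left (Nat.cast_le.mpr (rootedCount_mono _ e hXY)) (hβ i hi)

variable (V Pt β n) in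
/-- A bound for the change of `dH V Pt β n X e` when the edge `f` of `X` is flipped. -/
noncomputable def influence (e f : EdgeK n) : ℝ :=
  ∑ i, |β i| * (pairCount (Pt i) e f / (n : ℝ) ^ (V i - 2))

lemma hasBoundedDifferences_dH (e : EdgeK n) :
    HasBoundedDifferences (fun X => dH V Pt β n X e) (influence V Pt β n e) := fun X f => by
  simp only [dH_eq_sum, ← sum_sub_distrib]
  refine (abs_sum_le_sum_abs _ _).trans (sum_le_sum fun i _ => ?_)
  rw [← sub_div, ← mul_sub, mul_div_assoc, abs_mul, abs_div,
    abs_of_nonneg (by positivity : 0 ≤ (n : ℝ) ^ _)]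
  exact mul_le_mul_of_nonneg_left (div_le_div_of_nonneg_right
    (hasBoundedDifferences_rootedCount _ e X f) (by positivity)) (abs_nonneg _)

lemma influence_nonneg (e f : EdgeK n) : 0 ≤ influence V Pt β n e f := by
  unfold influence
  positivity

variable (Pt β) in
lemma exists_influence_bounds (hV : ∀ i, 2 ≤ V i) : ∃ C > 0, ∀ (n : ℕ) (e : EdgeK n),
    (∀ f, influence V Pt β n e f ≤ C / n) ∧ ∑ f, influence V Pt β n e f ≤ C := by
  set A := ∑ i, |β i| * (V i : ℝ) ^ 3 with hA
  set B := ∑ i, |β i| * ((#(Pt i) - 1 : ℕ) * (V i : ℝ) ^ 2)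
  have hA0 : 0 ≤ A := by positivity
  have hB0 : 0 ≤ B := by positivity
  refine ⟨A + B + 1, by positivity, fun n e => ⟨fun f => ?_, ?_⟩⟩
  · calc influence V Pt β n e f ≤ ∑ i, |β i| * ((V i : ℝ) ^ 3 / n) :=
          sum_le_sum fun i _ => mul_le_mul_of_nonneg_left
            (pairCount_div_le (hV i) (Pt i) e f) (abs_nonneg _)
      _ = A / n := by rw [hA, sum_div]; exact sum_congr rfl fun i _ => by ring
      _ ≤ (A + B + 1) / n := by gcongr; linarith
  · calc ∑ f, influence V Pt β n e f
        = ∑ i, |β i| * ((#(Pt i) - 1 : ℕ) * (hitCount (Pt i) e / (n : ℝ) ^ (V i - 2))) := by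
          simp only [influence]
          rw [sum_comm]
          refine sum_congr rfl fun i _ => ?_
          rw [← mul_sum, ← sum_div, ← Nat.cast_sum, sum_pairCount, Nat.cast_mul, mul_div_assoc]
      _ ≤ B := sum_le_sum fun i _ => mul_le_mul_of_nonneg_left
          (mul_le_mul_of_nonneg_left (hitCount_div_le (hV i) (Pt i) e) (Nat.cast_nonneg _))
          (abs_nonneg _)
      _ ≤ A + B + 1 := by linarith

lemma sum_influence_sq_le {C : ℝ} {e : EdgeK n} (hC : ∀ f, influence V Pt β n e f ≤ C / n)
    (hsum : ∑ f, influence V Pt β n e f ≤ C) : ∑ f, influence V Pt β n e f ^ 2 ≤ C ^ 2 / n :=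
  calc ∑ f, influence V Pt β n e f ^ 2 ≤ ∑ f, C / n * influence V Pt β n e f :=
        sum_le_sum fun f _ => (sq _).trans_le
          (mul_le_mul_of_nonneg_right (hC f) (influence_nonneg e f))
    _ = C / n * ∑ f, influence V Pt β n e f := (mul_sum ..).symm
    _ ≤ C / n * C := mul_le_mul_of_nonneg_left hsum ((influence_nonneg e e).trans (hC e))
    _ = C ^ 2 / n := by ring

lemma abs_dH_sub_le {C : ℝ} {e : EdgeK n} (hC : ∀ f, influence V Pt β n e f ≤ C / n)
    (X Y : Config n) : |dH V Pt β n X e - dH V Pt β n Y e| ≤ hamDist X Y * (C / n) := by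
  rw [hamDist, ← nsmul_eq_mul]
  exact ((hasBoundedDifferences_dH e).abs_sub_le X Y).trans
    (sum_le_card_nsmul _ _ _ fun f _ => hC f)

lemma sum_bernoulliWeight_mul_dH (q : ℝ) (e : EdgeK n) :
    ∑ X, bernoulliWeight q X * dH V Pt β n X e =
      ∑ i, β i * q ^ (#(Pt i) - 1) * (hitCount (Pt i) e / (n : ℝ) ^ (V i - 2)) := by
  simp only [dH_eq_sum, mul_sum]
  rw [sum_comm]
  refine sum_congr rfl fun i _ => ?_
  have h (X : Config n) :
      bernoulliWeight q X * (β i * rootedCount X (Pt i) e / (n : ℝ) ^ (V i - 2)) =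
        β i / (n : ℝ) ^ (V i - 2) * (bernoulliWeight q X * rootedCount X (Pt i) e) := by ring
  simp_rw [h, ← mul_sum, sum_bernoulliWeight_mul_rootedCount]
  ring

lemma sum_bernoulliWeight_dH_tail_le {q : ℝ} (hq : q ∈ Set.Icc (0 : ℝ) 1) {e : EdgeK n}
    {C η a : ℝ} (hC : 0 < C) (hinfl : ∀ f, influence V Pt β n e f ≤ C / n)
    (hsum : ∑ f, influence V Pt β n e f ≤ C) (hη : 0 ≤ η)
    (hmean : |∑ X, bernoulliWeight q X * dH V Pt β n X e - a| ≤ η / 2) :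
    ∑ X with η ≤ |dH V Pt β n X e - a|, bernoulliWeight q X ≤
      2 * Real.exp (-(η ^ 2 / (2 * C ^ 2) * n)) := by
  have hn : (0 : ℝ) < n := by exact_mod_cast pos_of_edge e
  have htail := sum_bernoulliWeight_tail_le (hasBoundedDifferences_dH e) hq (by positivity)
    (sum_influence_sq_le hinfl hsum) (div_nonneg hη zero_le_two)
  have hexp : 2 * (η / 2) ^ 2 / (C ^ 2 / n) = η ^ 2 / (2 * C ^ 2) * n := by
    field_simp
  rw [hexp] at htail
  refine (sum_le_sum_of_subset_of_nonneg (monotone_filter_right _ fun X _ hX => ?_)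
    fun X _ _ => bernoulliWeight_nonneg hq X).trans htail
  have htriangle := abs_sub_le (dH V Pt β n X e)
    (∑ Y, bernoulliWeight q Y * dH V Pt β n Y e) a
  linarith

open Filter Topology

lemma tendsto_descFactorial_div {m : ℕ} (hm : 2 ≤ m) :
    Tendsto (fun n : ℕ => (n.descFactorial m : ℝ) / (n.choose 2 * (n : ℝ) ^ (m - 2))) atTop
      (𝓝 2) := by
  have h := (isEquivalent_descFactorial m).div
    ((isEquivalent_choose 2).mul
      (Asymptotics.IsEquivalent.refl (u := fun n : ℕ => (n : ℝ) ^ (m - 2))))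
  refine h.symm.tendsto_nhds (tendsto_const_nhds.congr' ?_)
  filter_upwards [eventually_gt_atTop 0] with n hn
  have hn : (n : ℝ) ≠ 0 := by exact_mod_cast hn.ne'
  obtain ⟨k, rfl⟩ := Nat.exists_eq_add_of_le' hm
  simp only [Pi.div_apply, Pi.mul_apply, Nat.factorial, Nat.add_sub_cancel]
  field_simp
  push_cast
  ring

variable (V Pt β) in
lemma eventually_abs_sum_bernoulliWeight_mul_dH_sub_le (hV : ∀ i, 2 ≤ V i) (q : ℝ)
    {η : ℝ} (hη : 0 < η) :
    ∀ᶠ n : ℕ in atTop, ∀ e : EdgeK n,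
      |∑ X, bernoulliWeight q X * dH V Pt β n X e - PsiF Pt β q| < η := by
  have hlim : Tendsto (fun n : ℕ => ∑ i, β i * q ^ (#(Pt i) - 1) *
      (#(Pt i) * ((n.descFactorial (V i) : ℝ) / (n.choose 2 * (n : ℝ) ^ (V i - 2))))) atTop
      (𝓝 (∑ i, β i * q ^ (#(Pt i) - 1) * (#(Pt i) * 2))) :=
    tendsto_finsetSum _ fun i _ => ((tendsto_descFactorial_div (hV i)).const_mul _).const_mul _
  have hΨ : ∑ i, β i * q ^ (#(Pt i) - 1) * (#(Pt i) * 2) = PsiF Pt β q :=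
    sum_congr rfl fun i _ => by ring
  rw [hΨ] at hlim
  filter_upwards [Metric.tendsto_nhds.mp hlim η hη, eventually_ge_atTop 2] with n hn hn2 e
  rw [Real.dist_eq] at hn
  convert hn using 5
  rw [sum_bernoulliWeight_mul_dH]
  refine sum_congr rfl fun i _ => ?_
  have hchoose : (n.choose 2 : ℝ) ≠ 0 := by exact_mod_cast (Nat.choose_pos hn2).ne'
  have hcount : (hitCount (Pt i) e : ℝ) * n.choose 2 = #(Pt i) * n.descFactorial (V i) := by
    exact_mod_cast hitCount_mul_choose (Pt i) e
  rw [← mul_div_assoc (#(Pt i) : ℝ), ← hcount]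
  field_simp

lemma exists_sum_bernoulliWeight_dH_tail_le_exp (hV : ∀ i, 2 ≤ V i) {q : ℝ}
    (hq : q ∈ Set.Icc (0 : ℝ) 1) {η : ℝ} (hη : 0 < η) : ∃ c > 0, ∀ᶠ n : ℕ in atTop,
      ∑ X : Config n with ∃ e, η ≤ |dH V Pt β n X e - PsiF Pt β q|, bernoulliWeight q X ≤
        Real.exp (-(c * n)) := by
  obtain ⟨C, hC, hinfl⟩ := exists_influence_bounds Pt β hV
  set c := η ^ 2 / (4 * C ^ 2) with hc
  have hc2 : η ^ 2 / (2 * C ^ 2) = 2 * c := by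
    rw [hc]
    field_simp
    norm_num
  have hc0 : 0 < c := by positivity
  refine ⟨c, hc0, ?_⟩
  filter_upwards [eventually_abs_sum_bernoulliWeight_mul_dH_sub_le V Pt β hV q (half_pos hη),
    (tendsto_sq_mul_exp_neg hc0).eventually_lt_const one_pos] with n hmean hdecay
  have htail (e : EdgeK n) : ∑ X with η ≤ |dH V Pt β n X e - PsiF Pt β q|, bernoulliWeight q X ≤
      2 * Real.exp (-(2 * c * n)) :=
    hc2 ▸ sum_bernoulliWeight_dH_tail_le hq hC (hinfl n e).1 (hinfl n e).2 hη.le (hmean e).le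
  have hedges : (Fintype.card (EdgeK n) : ℝ) * 2 ≤ n ^ 2 := by
    have h := Nat.choose_le_pow_div (α := ℝ) 2 n
    rw [card_edgeK]
    linarith
  calc ∑ X : Config n with ∃ e, η ≤ |dH V Pt β n X e - PsiF Pt β q|, bernoulliWeight q X
      ≤ ∑ e : EdgeK n, ∑ X with η ≤ |dH V Pt β n X e - PsiF Pt β q|, bernoulliWeight q X :=
        sum_filter_exists_le (bernoulliWeight_nonneg hq) _
    _ ≤ ∑ e : EdgeK n, 2 * Real.exp (-(2 * c * n)) := sum_le_sum fun e _ => htail e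
    _ = Fintype.card (EdgeK n) * 2 * Real.exp (-(2 * c * n)) := by
        rw [sum_const, card_univ, nsmul_eq_mul, ← mul_assoc]
    _ ≤ n ^ 2 * Real.exp (-(2 * c * n)) := mul_le_mul_of_nonneg_right hedges (Real.exp_pos _).le
    _ = n ^ 2 * Real.exp (-(c * n)) * Real.exp (-(c * n)) := by
        rw [mul_assoc (_ ^ 2), ← Real.exp_add]
        ring_nf
    _ ≤ Real.exp (-(c * n)) := mul_le_of_le_one_left (Real.exp_pos _).le hdecay.le

end LocalField

section Thresholds

variable {s : ℕ} {V : Fin s → ℕ} {Pt : ∀ i, Finset (EdgeK (V i))} {β : Fin s → ℝ}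

lemma phiF_eq_sigmoid (p : ℝ) : phiF Pt β p = Real.sigmoid (PsiF Pt β p) := by
  rw [phiF, Real.sigmoid_def, Real.exp_neg]
  field_simp
  ring

lemma differentiable_phiF : Differentiable ℝ (phiF Pt β) := by
  have : Differentiable ℝ (PsiF Pt β) := by
    unfold PsiF
    fun_prop
  rw [funext phiF_eq_sigmoid]
  fun_prop

lemma exists_thresholds (h : LowTemp Pt β) :
    ∃ u w, u < w ∧ PsiF Pt β (Real.sigmoid u) < u ∧ w < PsiF Pt β (Real.sigmoid w) := by
  obtain ⟨p₁, p₂, -, -, hne, h₁, h₂, hd₁, hd₂⟩ := h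
  wlog hlt : p₁ < p₂ generalizing p₁ p₂
  · exact this p₂ p₁ hne.symm h₂ h₁ hd₂ hd₁ (hne.symm.lt_of_le (not_lt.mp hlt))
  obtain ⟨p, hp₁, hp₂⟩ := exists_between hlt
  obtain ⟨x, hx, hp₁x, hxp⟩ := (((eventually_lt_and_gt_of_deriv_lt_one
    differentiable_phiF.differentiableAt h₁ hd₁).1.and (Ioo_mem_nhdsGT hp₁)).exists)
  obtain ⟨y, hy, hpy, hyp₂⟩ := (((eventually_lt_and_gt_of_deriv_lt_one
    differentiable_phiF.differentiableAt h₂ hd₂).2.and (Ioo_mem_nhdsLT hp₂)).exists)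
  have hunit {z : ℝ} (hz₁ : p₁ < z) (hz₂ : z < p₂) : z ∈ Set.range Real.sigmoid := by
    rw [Real.range_sigmoid]
    exact ⟨(Real.sigmoid_pos _).trans (phiF_eq_sigmoid (Pt := Pt) p₁ ▸ h₁.trans_lt hz₁),
      (hz₂.trans_eq (h₂.symm.trans (phiF_eq_sigmoid p₂))).trans (Real.sigmoid_lt_one _)⟩
  obtain ⟨u, rfl⟩ := hunit hp₁x (hxp.trans hp₂)
  obtain ⟨w, rfl⟩ := hunit (hp₁.trans hpy) hyp₂
  rw [phiF_eq_sigmoid, Real.sigmoid_strictMono.lt_iff_lt] at hx hy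
  exact ⟨u, w, Real.sigmoid_strictMono.lt_iff_lt.mp (hxp.trans hpy), hx, hy⟩

end Thresholds

section Gibbs

variable {s : ℕ} {V : Fin s → ℕ} {Pt : ∀ i, Finset (EdgeK (V i))} {β : Fin s → ℝ} {n : ℕ}

lemma gibbs_pos (X : Config n) : 0 < gibbs V Pt β n X :=
  div_pos (Real.exp_pos _) (sum_pos (fun _ _ => Real.exp_pos _) univ_nonempty)

variable (V Pt β n) in
lemma sum_gibbs : ∑ X, gibbs V Pt β n X = 1 := by
  simp only [gibbs, ← sum_div]
  exact div_self (sum_pos (fun _ _ => Real.exp_pos _) univ_nonempty).ne'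

lemma gibbs_update_true (X : Config n) (e : EdgeK n) :
    gibbs V Pt β n (Function.update X e true) =
      Real.exp (dH V Pt β n X e) * gibbs V Pt β n (Function.update X e false) := by
  rw [gibbs, gibbs, ← mul_div_assoc, ← Real.exp_add, dH, setEdge_eq_update, setEdge_eq_update,
    sub_add_cancel]

end Gibbs

section Glauber

variable {s : ℕ} {V : Fin s → ℕ} {Pt : ∀ i, Finset (EdgeK (V i))} {β : Fin s → ℝ} {n : ℕ}

variable (V Pt β n) in
/-- The kernel that resamples the edge `e` conditionally on all the others; the Glauber dynamics
applies it at a uniformly random `e`. -/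
noncomputable def heatBath (e : EdgeK n) (X Y : Config n) : ℝ :=
  (if Y = setEdge X e true then
      Real.exp (dH V Pt β n X e) / (1 + Real.exp (dH V Pt β n X e)) else 0)
    + (if Y = setEdge X e false then 1 / (1 + Real.exp (dH V Pt β n X e)) else 0)

lemma glauber_eq_sum_heatBath (X Y : Config n) :
    glauber V Pt β n X Y = (n.choose 2 : ℝ)⁻¹ * ∑ e, heatBath V Pt β n e X Y := rfl

lemma heatBath_nonneg (e : EdgeK n) (X Y : Config n) : 0 ≤ heatBath V Pt β n e X Y := by
  unfold heatBath
  positivity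

lemma sum_heatBath (e : EdgeK n) (X : Config n) : ∑ Y, heatBath V Pt β n e X Y = 1 := by
  simp only [heatBath, sum_add_distrib, sum_ite_eq', mem_univ, if_true]
  field_simp
  ring

lemma heatBath_eq_conditional (e : EdgeK n) (X Y : Config n) :
    heatBath V Pt β n e X Y =
      if Function.update X e true = Function.update Y e true then
        gibbs V Pt β n Y / (gibbs V Pt β n (Function.update X e true) +
          gibbs V Pt β n (Function.update X e false)) else 0 := by
  have hpos := gibbs_pos (V := V) (Pt := Pt) (β := β) (Function.update X e false)
  have hne : Function.update X e true ≠ Function.update X e false := fun h => by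
    simpa using congrFun h e
  rw [gibbs_update_true X e, heatBath, setEdge_eq_update, setEdge_eq_update]
  by_cases h : Function.update X e true = Function.update Y e true
  · obtain ⟨b, rfl⟩ : ∃ b, Y = Function.update X e b := by
      refine ⟨Y e, ?_⟩
      simpa only [Function.update_idem, Function.update_eq_self] using
        (congrArg (Function.update · e (Y e)) h).symm
    cases b
    · rw [if_neg hne.symm, if_pos rfl, if_pos h]
      field_simp
      ring
    · rw [if_pos rfl, if_neg hne, if_pos h, gibbs_update_true X e]
      field_simp
      ring
  · have hY (b : Bool) : Y ≠ Function.update X e b := fun hb => h <| by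
      rw [hb, Function.update_idem]
    rw [if_neg (hY true), if_neg (hY false), if_neg h, add_zero]

lemma gibbs_mul_heatBath_comm (e : EdgeK n) (X Y : Config n) :
    gibbs V Pt β n X * heatBath V Pt β n e X Y = gibbs V Pt β n Y * heatBath V Pt β n e Y X := by
  rw [heatBath_eq_conditional, heatBath_eq_conditional]
  by_cases h : Function.update X e true = Function.update Y e true
  · have hfalse : Function.update X e false = Function.update Y e false := by
      simpa only [Function.update_idem] using congrArg (Function.update · e false) h
    rw [if_pos h, if_pos h.symm, h, hfalse]
    ring
  · rw [if_neg h, if_neg (Ne.symm h)]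
    ring

lemma hamDist_le_one_of_heatBath_ne_zero {e : EdgeK n} {X Y : Config n}
    (h : heatBath V Pt β n e X Y ≠ 0) : hamDist X Y ≤ 1 := by
  have hXY : Function.update X e true = Function.update Y e true := by
    by_contra hne
    exact h (heatBath_eq_conditional e X Y ▸ if_neg hne)
  refine (card_le_card fun f hf => mem_singleton.mpr ?_).trans_eq (card_singleton e)
  by_contra hfe
  exact (mem_filter.mp hf).2 (by simpa [hfe] using congrFun hXY f)

lemma sum_glauber (hn : 2 ≤ n) (X : Config n) : ∑ Y, glauber V Pt β n X Y = 1 := by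
  have hchoose : (n.choose 2 : ℝ) ≠ 0 := by exact_mod_cast (Nat.choose_pos hn).ne'
  simp only [glauber_eq_sum_heatBath, ← mul_sum]
  rw [sum_comm]
  simp only [sum_heatBath, sum_const, card_univ, card_edgeK, nsmul_eq_mul, mul_one]
  exact inv_mul_cancel₀ hchoose

lemma isLocalChain_glauber (hn : 2 ≤ n) :
    IsLocalChain (glauber V Pt β n) (gibbs V Pt β n) 1 where
  nonneg X Y := mul_nonneg (by positivity) (sum_nonneg fun e _ => heatBath_nonneg e X Y)
  sum_eq_one := sum_glauber hn
  stationary Y := by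
    have hrev (X : Config n) : gibbs V Pt β n X * glauber V Pt β n X Y =
        gibbs V Pt β n Y * glauber V Pt β n Y X := by
      simp only [glauber_eq_sum_heatBath, mul_left_comm (gibbs V Pt β n _), mul_sum,
        gibbs_mul_heatBath_comm _ X Y]
    simp only [hrev, ← mul_sum, sum_glauber hn, mul_one]
  hamDist_le X Y h := by
    obtain ⟨e, -, he⟩ := exists_ne_zero_of_sum_ne_zero (right_ne_zero_of_mul h)
    exact_mod_cast hamDist_le_one_of_heatBath_ne_zero he

end Glauber

section Wells

variable {s : ℕ} {V : Fin s → ℕ} {Pt : ∀ i, Finset (EdgeK (V i))} {β : Fin s → ℝ} {n : ℕ}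

variable (V Pt β n) in
/-- The configurations all of whose local fields are at most `u`. -/
noncomputable def lowWell (u : ℝ) : Finset (Config n) := {X | ∀ e, dH V Pt β n X e ≤ u}

variable (V Pt β n) in
/-- The configurations all of whose local fields are at least `w`. -/
noncomputable def highWell (w : ℝ) : Finset (Config n) := {X | ∀ e, w ≤ dH V Pt β n X e}

lemma disjoint_lowWell_highWell {u w : ℝ} (huw : u < w) (hn : 2 ≤ n) :
    Disjoint (lowWell V Pt β n u) (highWell V Pt β n w) := by
  have : Nonempty (EdgeK n) := Fintype.card_pos_iff.mp (card_edgeK n ▸ Nat.choose_pos hn)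
  refine disjoint_left.mpr fun X hlow hhigh => ?_
  obtain ⟨e⟩ := this
  exact huw.not_ge (((mem_filter.mp hhigh).2 e).trans ((mem_filter.mp hlow).2 e))

lemma holleyCondition_lowWell (hβ : ∀ i, 1 < #(Pt i) → 0 ≤ β i) (u : ℝ) :
    HolleyCondition ((lowWell V Pt β n u : Set (Config n)).indicator (gibbs V Pt β n))
      (bernoulliWeight (Real.sigmoid u)) := fun X Y e => by
  have hweight := bernoulliWeight_nonneg
    ⟨Real.sigmoid_nonneg u, Real.sigmoid_le_one u⟩ (Function.update Y e false)
  have hgibbs := gibbs_pos (V := V) (Pt := Pt) (β := β) (Function.update X e false)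
  simp only [Set.indicator_apply, mem_coe, bernoulliWeight_sigmoid_update_true, gibbs_update_true]
  by_cases hX : Function.update X e true ∈ lowWell V Pt β n u
  · have hfield : dH V Pt β n X e ≤ u := dH_update_self X e true ▸ (mem_filter.mp hX).2 e
    have hX' : Function.update X e false ∈ lowWell V Pt β n u :=
      mem_filter.mpr ⟨mem_univ _, fun f => (monotone_dH hβ f
        (update_le_update_iff'.mpr (Bool.false_le _))).trans ((mem_filter.mp hX).2 f)⟩
    rw [if_pos hX, if_pos hX']
    calc _ ≤ Real.exp u * gibbs V Pt β n (Function.update X e false) *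
          bernoulliWeight (Real.sigmoid u) (Function.update Y e false) := by gcongr
      _ = _ := by ring
  · rw [if_neg hX, zero_mul]
    split_ifs <;> positivity

lemma holleyCondition_highWell (hβ : ∀ i, 1 < #(Pt i) → 0 ≤ β i) (w : ℝ) :
    HolleyCondition (bernoulliWeight (Real.sigmoid w))
      ((highWell V Pt β n w : Set (Config n)).indicator (gibbs V Pt β n)) := fun X Y e => by
  have hweight := bernoulliWeight_nonneg
    ⟨Real.sigmoid_nonneg w, Real.sigmoid_le_one w⟩ (Function.update X e false)
  have hgibbs := gibbs_pos (V := V) (Pt := Pt) (β := β) (Function.update Y e false)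
  simp only [Set.indicator_apply, mem_coe, bernoulliWeight_sigmoid_update_true, gibbs_update_true]
  by_cases hY : Function.update Y e false ∈ highWell V Pt β n w
  · have hfield : w ≤ dH V Pt β n Y e := dH_update_self Y e false ▸ (mem_filter.mp hY).2 e
    have hY' : Function.update Y e true ∈ highWell V Pt β n w :=
      mem_filter.mpr ⟨mem_univ _, fun f => ((mem_filter.mp hY).2 f).trans (monotone_dH hβ f
        (update_le_update_iff'.mpr (Bool.false_le _)))⟩
    rw [if_pos hY, if_pos hY']
    calc _ = bernoulliWeight (Real.sigmoid w) (Function.update X e false) *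
          (Real.exp w * gibbs V Pt β n (Function.update Y e false)) := by ring
      _ ≤ _ := by gcongr
  · rw [if_neg hY, mul_zero]
    split_ifs <;> positivity

lemma sum_gibbs_lowWell_filter_le (hβ : ∀ i, 1 < #(Pt i) → 0 ≤ β i) (u : ℝ)
    {P : Config n → Prop} [DecidablePred P] (hP : Monotone P) :
    ∑ X ∈ lowWell V Pt β n u with P X, gibbs V Pt β n X ≤
      (∑ X with P X, bernoulliWeight (Real.sigmoid u) X) *
        ∑ X ∈ lowWell V Pt β n u, gibbs V Pt β n X := by
  have h := (holleyCondition_lowWell (V := V) (n := n) hβ u).sum_filter_mul_sum_le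
    (Set.indicator_nonneg fun X _ => (gibbs_pos X).le)
    (bernoulliWeight_nonneg ⟨Real.sigmoid_nonneg u, Real.sigmoid_le_one u⟩) hP
  simpa only [sum_bernoulliWeight, mul_one, Set.indicator_apply, mem_coe, sum_ite_mem,
    filter_inter, univ_inter, mul_comm (∑ _X ∈ lowWell V Pt β n u, _)] using h

lemma sum_gibbs_highWell_filter_le (hβ : ∀ i, 1 < #(Pt i) → 0 ≤ β i) (w : ℝ)
    {P : Config n → Prop} [DecidablePred P] (hP : Antitone P) :
    ∑ X ∈ highWell V Pt β n w with P X, gibbs V Pt β n X ≤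
      (∑ X with P X, bernoulliWeight (Real.sigmoid w) X) *
        ∑ X ∈ highWell V Pt β n w, gibbs V Pt β n X := by
  have h := (holleyCondition_highWell (V := V) (n := n) hβ w).sum_mul_sum_filter_le
    (bernoulliWeight_nonneg ⟨Real.sigmoid_nonneg w, Real.sigmoid_le_one w⟩)
    (Set.indicator_nonneg fun X _ => (gibbs_pos X).le) hP
  simpa only [sum_bernoulliWeight, one_mul, Set.indicator_apply, mem_coe, sum_ite_mem,
    filter_inter, univ_inter] using h

lemma exists_le_dH_of_mem_innerBoundary_lowWell {C u ε : ℝ}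
    (hinfl : ∀ e f, influence V Pt β n e f ≤ C / n) {X : Config n}
    (hX : X ∈ innerBoundary (lowWell V Pt β n u) (ε * n)) : ∃ e, u - ε * C ≤ dH V Pt β n X e := by
  obtain ⟨-, Y, hY, hXY⟩ := mem_filter.mp hX
  obtain ⟨e, he⟩ : ∃ e, u < dH V Pt β n Y e := by simpa [lowWell] using hY
  have hn : (0 : ℝ) < n := by exact_mod_cast pos_of_edge e
  have hC : 0 ≤ C / n := (influence_nonneg e e).trans (hinfl e e)
  have hclose : |dH V Pt β n X e - dH V Pt β n Y e| ≤ ε * C :=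
    calc _ ≤ hamDist X Y * (C / n) := abs_dH_sub_le (hinfl e) X Y
      _ ≤ ε * n * (C / n) := by gcongr
      _ = ε * C := by field_simp
  exact ⟨e, by linarith [neg_le_of_abs_le hclose]⟩

lemma exists_dH_le_of_mem_innerBoundary_highWell {C w ε : ℝ}
    (hinfl : ∀ e f, influence V Pt β n e f ≤ C / n) {X : Config n}
    (hX : X ∈ innerBoundary (highWell V Pt β n w) (ε * n)) :
    ∃ e, dH V Pt β n X e ≤ w + ε * C := by
  obtain ⟨-, Y, hY, hXY⟩ := mem_filter.mp hX
  obtain ⟨e, he⟩ : ∃ e, dH V Pt β n Y e < w := by simpa [highWell] using hY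
  have hn : (0 : ℝ) < n := by exact_mod_cast pos_of_edge e
  have hC : 0 ≤ C / n := (influence_nonneg e e).trans (hinfl e e)
  have hclose : |dH V Pt β n X e - dH V Pt β n Y e| ≤ ε * C :=
    calc _ ≤ hamDist X Y * (C / n) := abs_dH_sub_le (hinfl e) X Y
      _ ≤ ε * n * (C / n) := by gcongr
      _ = ε * C := by field_simp
  exact ⟨e, by linarith [le_of_abs_le hclose]⟩

open Filter

lemma nonempty_and_sum_innerBoundary_le {A : Finset (Config n)} {P : Config n → Prop}
    [DecidablePred P] {q r δ : ℝ} (hA : ∀ X, ¬ P X → X ∈ A) (hAP : ∀ X ∈ innerBoundary A r, P X)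
    (htail : ∑ X with P X, bernoulliWeight q X ≤ δ) (hδ : δ < 1)
    (hdom : ∑ X ∈ A with P X, gibbs V Pt β n X ≤
      (∑ X with P X, bernoulliWeight q X) * ∑ X ∈ A, gibbs V Pt β n X) :
    A.Nonempty ∧
      ∑ X ∈ innerBoundary A r, gibbs V Pt β n X ≤ δ * ∑ X ∈ A, gibbs V Pt β n X := by
  constructor
  · by_contra! hempty
    have hP (X : Config n) : P X := by_contra fun hX => by simpa [hempty] using hA X hX
    rw [filter_true_of_mem fun X _ => hP X, sum_bernoulliWeight] at htail
    exact htail.not_gt hδ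
  · calc ∑ X ∈ innerBoundary A r, gibbs V Pt β n X ≤ ∑ X ∈ A with P X, gibbs V Pt β n X :=
          sum_le_sum_of_subset_of_nonneg
            (fun X hX => mem_filter.mpr ⟨(mem_filter.mp hX).1, hAP X hX⟩)
            fun X _ _ => (gibbs_pos X).le
      _ ≤ (∑ X with P X, bernoulliWeight q X) * ∑ X ∈ A, gibbs V Pt β n X := hdom
      _ ≤ δ * ∑ X ∈ A, gibbs V Pt β n X :=
          mul_le_mul_of_nonneg_right htail (sum_nonneg fun X _ => (gibbs_pos X).le)

lemma lowWell_bottleneck (hV : ∀ i, 2 ≤ V i) (hβ : ∀ i, 1 < #(Pt i) → 0 ≤ β i) {u : ℝ}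
    (hu : PsiF Pt β (Real.sigmoid u) < u) :
    ∃ ε > 0, ∃ c > 0, ∀ᶠ n : ℕ in atTop, (lowWell V Pt β n u).Nonempty ∧
      ∑ X ∈ innerBoundary (lowWell V Pt β n u) (ε * n), gibbs V Pt β n X ≤
        Real.exp (-(c * n)) * ∑ X ∈ lowWell V Pt β n u, gibbs V Pt β n X := by
  obtain ⟨C, hC, hinfl⟩ := exists_influence_bounds Pt β hV
  set η := (u - PsiF Pt β (Real.sigmoid u)) / 2 with hη
  have hη0 : 0 < η := half_pos (sub_pos.mpr hu)
  have hq : Real.sigmoid u ∈ Set.Icc (0 : ℝ) 1 := ⟨Real.sigmoid_nonneg u, Real.sigmoid_le_one u⟩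
  obtain ⟨c, hc, hconc⟩ := exists_sum_bernoulliWeight_dH_tail_le_exp (Pt := Pt) (β := β) hV hq hη0
  refine ⟨η / C, by positivity, c, hc, ?_⟩
  filter_upwards [hconc, eventually_gt_atTop 0] with n hconc hn
  have hdecay : Real.exp (-(c * n)) < 1 := Real.exp_lt_one_iff.mpr (neg_lt_zero.mpr (by positivity))
  have hmono : Monotone fun X : Config n => ∃ e, u - η ≤ dH V Pt β n X e :=
    fun X Y hXY ⟨e, he⟩ => ⟨e, he.trans (monotone_dH hβ e hXY)⟩
  refine nonempty_and_sum_innerBoundary_le (fun X hX => ?_) (fun X hX => ?_) (hconc.trans' ?_)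
    hdecay (sum_gibbs_lowWell_filter_le hβ u hmono)
  · push Not at hX
    exact mem_filter.mpr ⟨mem_univ X, fun e => by linarith [hX e]⟩
  · rw [← div_mul_cancel₀ η hC.ne']
    exact exists_le_dH_of_mem_innerBoundary_lowWell (fun e => (hinfl n e).1) hX
  · refine sum_le_sum_of_subset_of_nonneg (monotone_filter_right _ ?_)
      fun X _ _ => bernoulliWeight_nonneg hq X
    rintro X - ⟨e, he⟩
    exact ⟨e, le_abs.mpr (.inl (by linarith))⟩

lemma highWell_bottleneck (hV : ∀ i, 2 ≤ V i) (hβ : ∀ i, 1 < #(Pt i) → 0 ≤ β i) {w : ℝ}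
    (hw : w < PsiF Pt β (Real.sigmoid w)) :
    ∃ ε > 0, ∃ c > 0, ∀ᶠ n : ℕ in atTop, (highWell V Pt β n w).Nonempty ∧
      ∑ X ∈ innerBoundary (highWell V Pt β n w) (ε * n), gibbs V Pt β n X ≤
        Real.exp (-(c * n)) * ∑ X ∈ highWell V Pt β n w, gibbs V Pt β n X := by
  obtain ⟨C, hC, hinfl⟩ := exists_influence_bounds Pt β hV
  set η := (PsiF Pt β (Real.sigmoid w) - w) / 2 with hη
  have hη0 : 0 < η := half_pos (sub_pos.mpr hw)
  have hq : Real.sigmoid w ∈ Set.Icc (0 : ℝ) 1 := ⟨Real.sigmoid_nonneg w, Real.sigmoid_le_one w⟩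
  obtain ⟨c, hc, hconc⟩ := exists_sum_bernoulliWeight_dH_tail_le_exp (Pt := Pt) (β := β) hV hq hη0
  refine ⟨η / C, by positivity, c, hc, ?_⟩
  filter_upwards [hconc, eventually_gt_atTop 0] with n hconc hn
  have hdecay : Real.exp (-(c * n)) < 1 := Real.exp_lt_one_iff.mpr (neg_lt_zero.mpr (by positivity))
  have hanti : Antitone fun X : Config n => ∃ e, dH V Pt β n X e ≤ w + η :=
    fun X Y hXY ⟨e, he⟩ => ⟨e, (monotone_dH hβ e hXY).trans he⟩
  refine nonempty_and_sum_innerBoundary_le (fun X hX => ?_) (fun X hX => ?_) (hconc.trans' ?_)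
    hdecay (sum_gibbs_highWell_filter_le hβ w hanti)
  · push Not at hX
    exact mem_filter.mpr ⟨mem_univ X, fun e => by linarith [hX e]⟩
  · rw [← div_mul_cancel₀ η hC.ne']
    exact exists_dH_le_of_mem_innerBoundary_highWell (fun e => (hinfl n e).1) hX
  · refine sum_le_sum_of_subset_of_nonneg (monotone_filter_right _ ?_)
      fun X _ _ => bernoulliWeight_nonneg hq X
    rintro X - ⟨e, he⟩
    exact ⟨e, le_abs.mpr (.inr (by linarith))⟩

end Wells

section SlowMixing

open Filter Topology

variable {s : ℕ} {V : Fin s → ℕ} {Pt : ∀ i, Finset (EdgeK (V i))} {β : Fin s → ℝ}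

lemma eventually_not_mixes_of_bottleneck {A : ∀ n, Finset (Config n)} {ε c : ℝ} (hc : 0 < c)
    (hA : ∀ᶠ n : ℕ in atTop, (A n).Nonempty ∧
      ∑ X ∈ innerBoundary (A n) (ε * n), gibbs V Pt β n X ≤
        Real.exp (-(c * n)) * ∑ X ∈ A n, gibbs V Pt β n X) :
    ∀ᶠ n : ℕ in atTop, ∑ X ∈ A n, gibbs V Pt β n X ≤ 1 / 2 →
      ∀ K, IsLocalChain K (gibbs V Pt β n) (ε * n) →
        ∀ t : ℕ, (t : ℝ) < Real.exp (c / 2 * n) → ¬ mixes K (gibbs V Pt β n) t := by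
  have hexp : Real.exp (-1) < 1 / 2 := Real.exp_neg_one_lt_half
  have hlim : Tendsto (fun n : ℕ => Real.exp (-(c / 2 * n))) atTop (𝓝 0) :=
    Real.tendsto_exp_neg_atTop_nhds_zero.comp
      (tendsto_natCast_atTop_atTop.const_mul_atTop (half_pos hc))
  filter_upwards [hA, hlim.eventually_lt_const (sub_pos.mpr hexp)] with n ⟨hne, hbd⟩ hsmall hhalf
    K hK t ht
  refine hK.not_mixes (fun X => (gibbs_pos X).le) (sum_gibbs V Pt β n)
    (sum_pos (fun X _ => gibbs_pos X) hne) hhalf hbd (lt_of_le_of_lt ?_ hsmall)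
  calc t * Real.exp (-(c * n)) ≤ Real.exp (c / 2 * n) * Real.exp (-(c * n)) := by gcongr
    _ = Real.exp (-(c / 2 * n)) := by
      rw [← Real.exp_add]
      ring_nf

variable (V Pt β) in
lemma eventually_isLocalChain_glauber {ε : ℝ} (hε : 0 < ε) :
    ∀ᶠ n : ℕ in atTop, IsLocalChain (glauber V Pt β n) (gibbs V Pt β n) (ε * n) := by
  filter_upwards [(tendsto_natCast_atTop_atTop.const_mul_atTop hε).eventually_ge_atTop 1,
    eventually_ge_atTop 2] with n hone hn
  exact (isLocalChain_glauber hn).mono hone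

theorem low_temperature_slow_mixing_general {s : ℕ} (V : Fin s → ℕ)
    (Pt : ∀ i, Finset (EdgeK (V i))) (β : Fin s → ℝ) (hV : ∀ i, 2 ≤ V i)
    (hβ : ∀ i, 1 < #(Pt i) → 0 ≤ β i) (hLT : LowTemp Pt β) :
    ∃ α > 0, ∃ ε > 0, ∀ᶠ n : ℕ in atTop, ∀ K, IsLocalChain K (gibbs V Pt β n) (ε * n) →
      ∀ t : ℕ, (t : ℝ) < Real.exp (α * n) → ¬ mixes K (gibbs V Pt β n) t := by
  obtain ⟨u, w, huw, hu, hw⟩ := exists_thresholds hLT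
  obtain ⟨ε₁, hε₁, c₁, hc₁, hlow⟩ := lowWell_bottleneck hV hβ hu
  obtain ⟨ε₂, hε₂, c₂, hc₂, hhigh⟩ := highWell_bottleneck hV hβ hw
  refine ⟨min (c₁ / 2) (c₂ / 2), by positivity, min ε₁ ε₂, by positivity, ?_⟩
  filter_upwards [eventually_not_mixes_of_bottleneck hc₁ hlow,
    eventually_not_mixes_of_bottleneck hc₂ hhigh, eventually_ge_atTop 2] with n hlow hhigh hn
    K hK t ht
  rcases sum_le_half_or_sum_le_half (fun X => (gibbs_pos X).le) (sum_gibbs V Pt β n)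
    (disjoint_lowWell_highWell huw hn) with hhalf | hhalf
  · exact hlow hhalf K (hK.mono (by gcongr; exact min_le_left ..)) t
      (ht.trans_le (by gcongr; exact min_le_left ..))
  · exact hhigh hhalf K (hK.mono (by gcongr; exact min_le_right ..)) t
      (ht.trans_le (by gcongr; exact min_le_right ..))

end SlowMixing

/-- **Low temperature (Theorem 2).** In the low temperature phase any local Markov chain
(one changing at most `m n = o(n)` edges per step) with stationary distribution the Gibbs
measure has mixing time at least `e^(αn)`; in particular so does the Glauber dynamics. -/
theorem low_temperature_slow_mixing
    {L s : ℕ} (hL : 2 ≤ L) (hs : 0 < s)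
    (V : Fin s → ℕ) (Pt : ∀ i, Finset (EdgeK (V i))) (β : Fin s → ℝ)
    (hV2 : ∀ i, 2 ≤ V i) (hVL : ∀ i, V i ≤ L)
    (hG1V : V ⟨0, hs⟩ = 2) (hG1E : (Pt ⟨0, hs⟩).card = 1)
    (hβ : ∀ i : Fin s, 0 < (i : ℕ) → 0 < β i)
    (hLT : LowTemp Pt β)
    (m : ℕ → ℕ)
    (hm : Filter.Tendsto (fun n : ℕ => (m n : ℝ) / (n : ℝ)) Filter.atTop (nhds 0)) :
    ∃ α : ℝ, 0 < α ∧ ∃ N : ℕ, ∀ n ≥ N,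
      (∀ K : Config n → Config n → ℝ,
          (∀ X Y, 0 ≤ K X Y) →
          (∀ X, ∑ Y, K X Y = 1) →
          (∀ Y, ∑ X, gibbs V Pt β n X * K X Y = gibbs V Pt β n Y) →
          (∀ X Y, K X Y ≠ 0 → hamDist X Y ≤ m n) →
          ∀ t : ℕ, (t : ℝ) < Real.exp (α * n) → ¬ mixes K (gibbs V Pt β n) t) ∧
      (∀ t : ℕ, (t : ℝ) < Real.exp (α * n) →
        ¬ mixes (glauber V Pt β n) (gibbs V Pt β n) t) := by
  have hβ' (i : Fin s) (hi : 1 < #(Pt i)) : 0 ≤ β i := by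
    refine (hβ i (Nat.pos_of_ne_zero fun h0 => ?_)).le
    rw [show i = ⟨0, hs⟩ from Fin.ext h0, hG1E] at hi
    exact hi.false
  obtain ⟨α, hα, ε, hε, hslow⟩ := low_temperature_slow_mixing_general V Pt β hV2 hβ' hLT
  obtain ⟨N, hN⟩ := Filter.eventually_atTop.mp (hslow.and
    ((eventually_le_mul_of_tendsto_div_zero hm hε).and
      (eventually_isLocalChain_glauber V Pt β hε)))
  refine ⟨α, hα, N, fun n hn => ?_⟩
  obtain ⟨hslow, hmn, hglauber⟩ := hN n hn
  exact ⟨fun K hnonneg hsum hstat hstep => hslow K ⟨hnonneg, hsum, hstat, fun X Y hXY =>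
    (Nat.cast_le.mpr (hstep X Y hXY)).trans hmn⟩, hslow _ hglauber⟩
end

section
/- Asymptotic independence of edges: in the high temperature phase with unique fixed point p* of φ(p)=p, for every k ≥ 1 and every ε > 0 there exists N such that for all n ≥ N, for every collection of k distinct edges e_1,…,e_k of K_n and every (a_1,…,a_k) ∈ {0,1}^k, a random graph X drawn from the Gibbs measure p_n satisfies |P(x_{e_1}=a_1,…,x_{e_k}=a_k) − (p*)^{Σa_i}(1−p*)^{k−Σa_i}| ≤ ε, where x_{e_i} is the indicator that e_i is an edge of X. Thus any finite collection of edge indicators is asymptotically independent Bernoulli(p*). -/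
open Finset

open scoped Classical

/-!
Say that `M` is an asymptotic upper bound if, given any boundedly many other edges, the conditional
probability of an edge under the Gibbs measure is at most `M + o(1)`, uniformly. Two copies of a
pattern rooted at an edge `f` overlap negligibly often, so the `j`-th moment of the density `D` of
rooted copies is asymptotically at most `M ^ (j * (#G - 1))`; for large `j` this shows that `D`
exceeds `M ^ (#G - 1)` by more than `o(1)` only with vanishing probability, even given boundedly
many edges. Since an edge is resampled with probability `σ (∂_f H)`, where `σ` is the logistic
function, and `∂_f H` is increasing in the densities, `φ M` is then an asymptotic upper bound, too.
The set of asymptotic upper bounds is closed, so its infimum `m` satisfies `m ≤ φ m`, and there is a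
fixed point of `φ` above `m`: the only fixed point `p*` is an asymptotic upper bound. The same holds
for lower bounds, and multiplying the conditional probabilities gives the product formula.
-/

open Filter Topology Function
open scoped BigOperators

namespace ERGM

section RealAnalysis

theorem exists_mem_le_isFixedPt {α : Type*} [ConditionallyCompleteLinearOrder α]
    [TopologicalSpace α] [OrderTopology α] [DenselyOrdered α] {φ : α → α} (hφ : Continuous φ)
    {A : Set α} (hA : IsClosed A) (hbdd : BddBelow A) (hmaps : Set.MapsTo φ A A)
    {b : α} (hb : b ∈ A) (hφb : φ b ≤ b) : ∃ m ∈ A, ∃ q, m ≤ q ∧ IsFixedPt φ q := by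
  have hm : sInf A ∈ A := hA.csInf_mem ⟨b, hb⟩ hbdd
  obtain ⟨q, hq, hfix⟩ := exists_mem_Icc_isFixedPt hφ.continuousOn (csInf_le hbdd hb)
    (csInf_le hbdd (hmaps hm)) hφb
  exact ⟨_, hm, q, hq.1, hfix⟩

theorem exists_sigmoid_sub_eq_mul (x y : ℝ) :
    ∃ r ∈ Set.Icc (0 : ℝ) 1, Real.sigmoid x - Real.sigmoid y = r * (x - y) := by
  obtain ⟨z, hz⟩ : ∃ z, Real.sigmoid x - Real.sigmoid y = deriv Real.sigmoid z * (x - y) := by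
    rcases lt_trichotomy x y with hxy | rfl | hxy
    · obtain ⟨z, -, hz⟩ := exists_deriv_eq_slope Real.sigmoid hxy
        continuous_sigmoid.continuousOn differentiable_sigmoid.differentiableOn
      exact ⟨z, by rw [hz]; field_simp [sub_ne_zero.2 hxy.ne']; ring⟩
    · exact ⟨0, by simp⟩
    · obtain ⟨z, -, hz⟩ := exists_deriv_eq_slope Real.sigmoid hxy
        continuous_sigmoid.continuousOn differentiable_sigmoid.differentiableOn
      exact ⟨z, by rw [hz, div_mul_cancel₀ _ (sub_ne_zero.2 hxy.ne')]⟩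
  have h0 := Real.sigmoid_nonneg z
  have h1 := Real.sigmoid_le_one z
  exact ⟨_, by rw [Real.deriv_sigmoid]; constructor <;> nlinarith, hz⟩

theorem mul_sigmoid_sub_le_posPart (τ x y : ℝ) :
    τ * (Real.sigmoid x - Real.sigmoid y) ≤ (τ * (x - y))⁺ := by
  obtain ⟨r, ⟨hr0, hr1⟩, hr⟩ := exists_sigmoid_sub_eq_mul x y
  calc τ * (Real.sigmoid x - Real.sigmoid y) = r * (τ * (x - y)) := by rw [hr]; ring
    _ ≤ r * (τ * (x - y))⁺ := mul_le_mul_of_nonneg_left (le_posPart _) hr0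
    _ ≤ (τ * (x - y))⁺ := mul_le_of_le_one_left (posPart_nonneg _) hr1

theorem posPart_sub_le_add_div_pow {t q δ : ℝ} (ht0 : 0 ≤ t) (ht1 : t ≤ 1) (hq : 0 ≤ q)
    (hδ : 0 < δ) (j : ℕ) : (t - q)⁺ ≤ δ + (t / (q + δ)) ^ j := by
  have hqδ : 0 < q + δ := by linarith
  have hpow : 0 ≤ (t / (q + δ)) ^ j := by positivity
  rw [posPart_def]
  refine sup_le ?_ (by linarith)
  rcases le_total t (q + δ) with h | h
  · linarith
  · have := one_le_pow₀ (n := j) ((one_le_div hqδ).2 h)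
    linarith

theorem posPart_sum_le {κ : Type*} (s : Finset κ) (u : κ → ℝ) :
    (∑ i ∈ s, u i)⁺ ≤ ∑ i ∈ s, (u i)⁺ :=
  sup_le (sum_le_sum fun _ _ => le_posPart _) (sum_nonneg fun _ _ => posPart_nonneg _)

end RealAnalysis

section LocalMean

theorem expect_add_ite_le {κ : Type*} {R : Finset κ} {P : κ → Prop} [DecidablePred P]
    {q δ : ℝ} (hq : 0 ≤ q) (hδ : 0 ≤ δ) (hP : (#{i ∈ R | P i} : ℝ) ≤ δ * #R) :
    𝔼 i ∈ R, (q + if P i then 1 else 0) ≤ q + δ := by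
  rcases R.eq_empty_or_nonempty with rfl | hR
  · simpa using add_nonneg hq hδ
  · have hR0 : (0 : ℝ) < #R := by exact_mod_cast hR.card_pos
    rw [expect_add_distrib, expect_const hR, expect_eq_sum_div_card, sum_boole]
    exact add_le_add le_rfl ((div_le_iff₀ hR0).2 hP)

theorem dotProduct_expect {Ω κ : Type*} [Fintype Ω] (w : Ω → ℝ) (R : Finset κ) (g : κ → Ω → ℝ) :
    w ⬝ᵥ (𝔼 i ∈ R, g i) = 𝔼 i ∈ R, w ⬝ᵥ g i := by
  simp only [dotProduct, expect_apply, mul_expect, expect_sum_comm]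

variable {ι α : Type*}

theorem dependsOn_mul {h h' : (ι → α) → ℝ} {s t : Set ι} (hh : DependsOn h s)
    (hh' : DependsOn h' t) : DependsOn (h * h') (s ∪ t) := fun _ _ hxy =>
  congrArg₂ (· * ·) (hh fun i hi => hxy i (.inl hi)) (hh' fun i hi => hxy i (.inr hi))

theorem dependsOn_prod {F : Finset ι} {u : ι → (ι → α) → ℝ}
    (hu : ∀ i ∈ F, DependsOn (u i) {i}) : DependsOn (∏ i ∈ F, u i) (F : Set ι) := by
  intro x y hxy
  simp only [Finset.prod_apply]
  exact prod_congr rfl fun i hi => hu i hi fun j hj => hxy j (by simp_all)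

/-- `[0, 1]`-valued functions `W i`, `i ∈ R`, each of which depends on a set `F i` of at most `l`
sites avoiding `A`. -/
structure IsLocalFamily {κ : Type*} (A : Finset ι) (l : ℕ) (R : Finset κ) (F : κ → Finset ι)
    (W : κ → (ι → α) → ℝ) : Prop where
  disjoint : ∀ i ∈ R, Disjoint (F i) A
  card_le : ∀ i ∈ R, #(F i) ≤ l
  dependsOn : ∀ i ∈ R, DependsOn (W i) (F i : Set ι)
  mem_Icc : ∀ i ∈ R, W i ∈ Set.Icc 0 1

theorem IsLocalFamily.expect_mem_Icc {κ : Type*} {A : Finset ι} {l : ℕ} {R : Finset κ}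
    {F : κ → Finset ι} {W : κ → (ι → α) → ℝ} (hW : IsLocalFamily A l R F W) :
    𝔼 i ∈ R, W i ∈ Set.Icc (0 : (ι → α) → ℝ) 1 := by
  refine ⟨expect_nonneg fun i hi => (hW.mem_Icc i hi).1, ?_⟩
  rcases R.eq_empty_or_nonempty with rfl | hR
  · simp
  · exact expect_le hR fun i hi => (hW.mem_Icc i hi).2

variable [Fintype (ι → α)]

/-- The conditional mean of `u` given the coordinates in `S` is at most `c` under the weight `w`,
for all `S` of at most `K` sites avoiding `A`. Conditioning is expressed by testing against
nonnegative functions `h` of those coordinates, so that `w` needs no normalization. -/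
def LocalMeanLE (w : (ι → α) → ℝ) (K : ℕ) (A : Finset ι) (u : (ι → α) → ℝ) (c : ℝ) : Prop :=
  ∀ S : Finset ι, #S ≤ K → Disjoint S A → ∀ h : (ι → α) → ℝ, 0 ≤ h → DependsOn h (S : Set ι) →
    w ⬝ᵥ (h * u) ≤ c * (w ⬝ᵥ h)

namespace LocalMeanLE

variable {w u v : (ι → α) → ℝ} {K : ℕ} {A : Finset ι} {c d : ℝ}

theorem of_card_le {K' : ℕ} (hu : LocalMeanLE w K' A u c) (hK : K ≤ K') : LocalMeanLE w K A u c :=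
  fun S hS => hu S (hS.trans hK)

theorem mono (hw : 0 ≤ w) (hv : LocalMeanLE w K A v c) (huv : u ≤ v) (hcd : c ≤ d) :
    LocalMeanLE w K A u d := fun S hS hSA h hh hdep =>
  calc w ⬝ᵥ (h * u) ≤ w ⬝ᵥ (h * v) :=
        dotProduct_le_dotProduct_of_nonneg_left (mul_le_mul_of_nonneg_left huv hh) hw
    _ ≤ c * (w ⬝ᵥ h) := hv S hS hSA h hh hdep
    _ ≤ d * (w ⬝ᵥ h) := mul_le_mul_of_nonneg_right hcd (dotProduct_nonneg_of_nonneg hw hh)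

theorem const (w : (ι → α) → ℝ) (K : ℕ) (A : Finset ι) (c : ℝ) :
    LocalMeanLE w K A (fun _ => c) c := fun S _ _ h _ _ => by
  rw [show h * (fun _ => c) = c • h from funext fun X => mul_comm _ _, dotProduct_smul, smul_eq_mul]

theorem add (hu : LocalMeanLE w K A u c) (hv : LocalMeanLE w K A v d) :
    LocalMeanLE w K A (u + v) (c + d) := fun S hS hSA h hh hdep => by
  rw [mul_add, dotProduct_add, add_mul]
  exact add_le_add (hu S hS hSA h hh hdep) (hv S hS hSA h hh hdep)

theorem const_smul (hu : LocalMeanLE w K A u c) {a : ℝ} (ha : 0 ≤ a) :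
    LocalMeanLE w K A (a • u) (a * c) := fun S hS hSA h hh hdep => by
  rw [mul_smul_comm, dotProduct_smul, smul_eq_mul, mul_assoc]
  exact mul_le_mul_of_nonneg_left (hu S hS hSA h hh hdep) ha

/-- For `τ = 1` this bounds a conditional mean from above, for `τ = -1` from below. -/
theorem smul_mul (hw : 0 ≤ w) {B : Finset ι} {τ a b δ η : ℝ} (hAB : Disjoint A B)
    (hdep : DependsOn v (A : Set ι)) (hv01 : v ∈ Set.Icc 0 1) (ha : a ∈ Set.Icc (0 : ℝ) 1)
    (hδ : 0 ≤ δ) (hη : 0 ≤ η) (hu : LocalMeanLE w (K + #A) B (τ • u) (τ * a + δ))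
    (hv : LocalMeanLE w K A (τ • v) (τ * b + η)) :
    LocalMeanLE w K (A ∪ B) (τ • (v * u)) (τ * (a * b) + (δ + η)) := by
  intro S hS hSAB h hh hSdep
  obtain ⟨hSA, hSB⟩ := disjoint_union_right.1 hSAB
  have hwh : 0 ≤ w ⬝ᵥ h := dotProduct_nonneg_of_nonneg hw hh
  have hwhv : w ⬝ᵥ (h * v) ≤ w ⬝ᵥ h :=
    dotProduct_le_dotProduct_of_nonneg_left (mul_le_of_le_one_right hh hv01.2) hw
  have hinner : w ⬝ᵥ (h * v * (τ • u)) ≤ (τ * a + δ) * (w ⬝ᵥ (h * v)) := by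
    refine hu (S ∪ A) ((card_union_le _ _).trans (by omega)) (disjoint_union_left.2 ⟨hSB, hAB⟩) _
      (mul_nonneg hh hv01.1) ?_
    rw [coe_union]
    exact dependsOn_mul hSdep hdep
  have houter : τ * (w ⬝ᵥ (h * v)) ≤ (τ * b + η) * (w ⬝ᵥ h) := by
    simpa [mul_smul_comm, dotProduct_smul] using hv S hS hSA h hh hSdep
  calc w ⬝ᵥ (h * (τ • (v * u))) = w ⬝ᵥ (h * v * (τ • u)) := by
        simp only [mul_smul_comm, mul_assoc]
    _ ≤ (τ * a + δ) * (w ⬝ᵥ (h * v)) := hinner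
    _ = a * (τ * (w ⬝ᵥ (h * v))) + δ * (w ⬝ᵥ (h * v)) := by ring
    _ ≤ a * ((τ * b + η) * (w ⬝ᵥ h)) + δ * (w ⬝ᵥ h) :=
        add_le_add (mul_le_mul_of_nonneg_left houter ha.1) (mul_le_mul_of_nonneg_left hwhv hδ)
    _ = (τ * (a * b) + δ) * (w ⬝ᵥ h) + a * (η * (w ⬝ᵥ h)) := by ring
    _ ≤ (τ * (a * b) + δ) * (w ⬝ᵥ h) + η * (w ⬝ᵥ h) :=
        add_le_add le_rfl (mul_le_of_le_one_left (mul_nonneg hη hwh) ha.2)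
    _ = (τ * (a * b) + (δ + η)) * (w ⬝ᵥ h) := by ring

theorem smul_prod (hw : 0 ≤ w) {u : ι → (ι → α) → ℝ} {p : ι → ℝ} {τ δ : ℝ} (hδ : 0 ≤ δ)
    {F : Finset ι} (hdep : ∀ i ∈ F, DependsOn (u i) {i}) (hu : ∀ i ∈ F, u i ∈ Set.Icc 0 1)
    (hp : ∀ i ∈ F, p i ∈ Set.Icc (0 : ℝ) 1)
    (hmean : ∀ i ∈ F, LocalMeanLE w (K + #F) {i} (τ • u i) (τ * p i + δ)) :
    LocalMeanLE w K F (τ • ∏ i ∈ F, u i) (τ * ∏ i ∈ F, p i + #F * δ) := by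
  induction F using Finset.induction_on with
  | empty => exact (const w K ∅ τ).mono hw (fun X => by simp) (by simp)
  | insert i F hi ih =>
    simp only [Finset.forall_mem_insert] at hdep hu hp hmean
    rw [card_insert_of_notMem hi] at hmean ⊢
    have hF := ih hdep.2 hu.2 hp.2 fun j hj => (hmean.2 j hj).of_card_le (by omega)
    have hstep := smul_mul hw (disjoint_singleton_right.2 hi) (dependsOn_prod hdep.2)
      ⟨prod_nonneg fun j hj => (hu.2 j hj).1,
        prod_le_one (fun j hj => (hu.2 j hj).1) fun j hj => (hu.2 j hj).2⟩
      hp.1 hδ (by positivity) (hmean.1.of_card_le (by omega)) hF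
    rw [prod_insert hi, prod_insert hi, mul_comm (u i), insert_eq, union_comm]
    exact hstep.mono hw le_rfl (by push_cast; linarith)

theorem average_mul (hw : 0 ≤ w) {κ : Type*} {R : Finset κ} {F : κ → Finset ι}
    {W : κ → (ι → α) → ℝ} {k l : ℕ} {q δ : ℝ} (hc : 0 ≤ c) (hδ : 0 ≤ δ)
    (hu : LocalMeanLE w (k + l) A u c) (hW : IsLocalFamily A l R F W) (hq : 0 ≤ q)
    (hmean : ∀ i ∈ R, LocalMeanLE w k (F i) (W i) q)
    (hbad : ∀ S : Finset ι, #S ≤ k → (#{i ∈ R | ¬Disjoint S (F i)} : ℝ) ≤ δ * #R) :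
    LocalMeanLE w k A ((𝔼 i ∈ R, W i) * u) ((q + δ) * c) := by
  intro S hS hSA h hh hSdep
  have hwh : 0 ≤ w ⬝ᵥ h := dotProduct_nonneg_of_nonneg hw hh
  have hterm : ∀ i ∈ R, w ⬝ᵥ (h * W i * u) ≤
      (q + if ¬Disjoint S (F i) then 1 else 0) * (c * (w ⬝ᵥ h)) := by
    intro i hi
    have hWh : w ⬝ᵥ (h * W i) ≤ (q + if ¬Disjoint S (F i) then 1 else 0) * (w ⬝ᵥ h) := by
      split_ifs with hdisj
      · simpa using hmean i hi S hS hdisj h hh hSdep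
      · calc w ⬝ᵥ (h * W i) ≤ w ⬝ᵥ h := dotProduct_le_dotProduct_of_nonneg_left
              (mul_le_of_le_one_right hh (hW.mem_Icc i hi).2) hw
          _ ≤ (q + 1) * (w ⬝ᵥ h) := le_mul_of_one_le_left hwh (by linarith)
    have hWu : w ⬝ᵥ (h * W i * u) ≤ c * (w ⬝ᵥ (h * W i)) := by
      refine hu (S ∪ F i) ((card_union_le _ _).trans (add_le_add hS (hW.card_le i hi)))
        (disjoint_union_left.2 ⟨hSA, hW.disjoint i hi⟩) _ (mul_nonneg hh (hW.mem_Icc i hi).1) ?_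
      rw [coe_union]
      exact dependsOn_mul hSdep (hW.dependsOn i hi)
    nlinarith
  calc w ⬝ᵥ (h * ((𝔼 i ∈ R, W i) * u)) = 𝔼 i ∈ R, w ⬝ᵥ (h * W i * u) := by
        rw [← dotProduct_expect, ← expect_mul, ← mul_expect, mul_assoc]
    _ ≤ 𝔼 i ∈ R, (q + if ¬Disjoint S (F i) then 1 else 0) * (c * (w ⬝ᵥ h)) :=
        expect_le_expect hterm
    _ = (𝔼 i ∈ R, (q + if ¬Disjoint S (F i) then 1 else 0)) * (c * (w ⬝ᵥ h)) :=
        (expect_mul _ _ _).symm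
    _ ≤ (q + δ) * c * (w ⬝ᵥ h) := by
        rw [mul_assoc]
        exact mul_le_mul_of_nonneg_right (expect_add_ite_le hq hδ (hbad S hS)) (mul_nonneg hc hwh)

end LocalMeanLE

end LocalMean

section AsympMean

variable {ι : ℕ → Type*} {α : Type*} [∀ n, Fintype (ι n → α)]

/-- Asymptotically, the mean of `u n f` given boundedly many coordinates other than `f` is at most
`c`, uniformly in the site `f`. -/
def AsympMeanLE (w : ∀ n, (ι n → α) → ℝ) (u : ∀ n, ι n → (ι n → α) → ℝ) (c : ℝ) : Prop :=
  ∀ K : ℕ, ∀ δ > 0, ∀ᶠ n in atTop, ∀ f, LocalMeanLE (w n) K {f} (u n f) (c + δ)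

namespace AsympMeanLE

variable {w : ∀ n, (ι n → α) → ℝ} {u v : ∀ n, ι n → (ι n → α) → ℝ} {c d : ℝ}

theorem of_le_add (hw : ∀ n, 0 ≤ w n) (hv : AsympMeanLE w v c)
    (huv : ∀ δ > 0, ∀ᶠ n in atTop, ∀ f X, u n f X ≤ v n f X + δ) : AsympMeanLE w u c := by
  intro K δ hδ
  filter_upwards [hv K (δ / 2) (half_pos hδ), huv (δ / 2) (half_pos hδ)] with n hn hle f
  exact ((hn f).add (.const (w n) K {f} (δ / 2))).mono (hw n) (hle f) (by linarith)

theorem of_forall_gt (h : ∀ c' > c, AsympMeanLE w u c') : AsympMeanLE w u c := by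
  intro K δ hδ
  filter_upwards [h (c + δ / 2) (by linarith) K (δ / 2) (half_pos hδ)] with n hn f
  have := hn f
  rwa [add_assoc, add_halves] at this

theorem mono (hw : ∀ n, 0 ≤ w n) (hu : AsympMeanLE w u c) (hcd : c ≤ d) : AsympMeanLE w u d :=
  fun K δ hδ => (hu K δ hδ).mono fun n hn f => (hn f).mono (hw n) le_rfl (by linarith)

theorem const (hw : ∀ n, 0 ≤ w n) (c : ℝ) : AsympMeanLE w (fun _ _ _ => c) c :=
  fun K δ hδ => .of_forall fun n f => (LocalMeanLE.const (w n) K {f} c).mono (hw n) le_rfl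
    (by linarith)

theorem add (hu : AsympMeanLE w u c) (hv : AsympMeanLE w v d) :
    AsympMeanLE w (fun n f => u n f + v n f) (c + d) := by
  intro K δ hδ
  filter_upwards [hu K (δ / 2) (half_pos hδ), hv K (δ / 2) (half_pos hδ)] with n hun hvn f
  have := (hun f).add (hvn f)
  rwa [add_add_add_comm, add_halves] at this

theorem const_smul (hw : ∀ n, 0 ≤ w n) (hu : AsympMeanLE w u c) {a : ℝ} (ha : 0 ≤ a) :
    AsympMeanLE w (fun n f => a • u n f) (a * c) := by
  intro K δ hδ
  have ha1 : 0 < a + 1 := by linarith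
  filter_upwards [hu K (δ / (a + 1)) (by positivity)] with n hn f
  refine ((hn f).const_smul ha).mono (hw n) le_rfl ?_
  have : a * (δ / (a + 1)) ≤ (a + 1) * (δ / (a + 1)) := by gcongr; linarith
  rw [mul_div_cancel₀ _ ha1.ne'] at this
  linarith

theorem sum (hw : ∀ n, 0 ≤ w n) {κ : Type*} {s : Finset κ} {u : κ → ∀ n, ι n → (ι n → α) → ℝ}
    {c : κ → ℝ} (hu : ∀ i ∈ s, AsympMeanLE w (u i) (c i)) :
    AsympMeanLE w (fun n f => ∑ i ∈ s, u i n f) (∑ i ∈ s, c i) := by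
  induction s using Finset.induction_on with
  | empty => exact const hw 0
  | insert i s hi ih =>
    simp only [Finset.forall_mem_insert] at hu
    simpa only [sum_insert hi] using hu.1.add (ih hu.2)

theorem isClosed_setOf (hw : ∀ n, 0 ≤ w n) (τ : ℝ) :
    IsClosed {M : ℝ | AsympMeanLE w u (τ * M)} := by
  rw [← isSeqClosed_iff_isClosed]
  intro M m hM hm
  refine of_forall_gt fun c' hc' => ?_
  obtain ⟨k, hk⟩ := ((hm.const_mul τ).eventually_lt_const hc').exists
  exact (hM k).mono hw hk.le

end AsympMeanLE

/-- For every site `f`, a local family avoiding `f` whose members have asymptotic local mean at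
most `q`, and of which only a vanishing proportion meets any given bounded set of sites. -/
structure IsSparseLocalFamily {κ : ℕ → Type*} (w : ∀ n, (ι n → α) → ℝ) (l : ℕ)
    (R : ∀ n, ι n → Finset (κ n)) (F : ∀ n, ι n → κ n → Finset (ι n))
    (W : ∀ n, ι n → κ n → (ι n → α) → ℝ) (q : ℝ) : Prop where
  isLocalFamily : ∀ n f, IsLocalFamily {f} l (R n f) (F n f) (W n f)
  localMeanLE : ∀ K : ℕ, ∀ δ > 0, ∀ᶠ n in atTop, ∀ f, ∀ i ∈ R n f,
    LocalMeanLE (w n) K (F n f i) (W n f i) (q + δ)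
  sparse : ∀ K : ℕ, ∀ δ > 0, ∀ᶠ n in atTop, ∀ f, ∀ S : Finset (ι n), #S ≤ K →
    (#{i ∈ R n f | ¬Disjoint S (F n f i)} : ℝ) ≤ δ * #(R n f)

namespace IsSparseLocalFamily

variable {κ : ℕ → Type*} {w : ∀ n, (ι n → α) → ℝ} {l : ℕ}
  {R : ∀ n, ι n → Finset (κ n)} {F : ∀ n, ι n → κ n → Finset (ι n)}
  {W : ∀ n, ι n → κ n → (ι n → α) → ℝ} {q : ℝ}

theorem asympMeanLE_average_pow (hW : IsSparseLocalFamily w l R F W q) (hw : ∀ n, 0 ≤ w n)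
    (hq : 0 ≤ q) (j : ℕ) :
    AsympMeanLE w (fun n f => (𝔼 i ∈ R n f, W n f i) ^ j) (q ^ j) := by
  induction j with
  | zero => simp only [pow_zero]; exact AsympMeanLE.const hw 1
  | succ j ih =>
    intro K δ hδ
    have hlim : Tendsto (fun η : ℝ => (q + η + η) * (q ^ j + η)) (𝓝[>] 0) (𝓝 (q ^ (j + 1))) := by
      have hcont : Continuous fun η : ℝ => (q + η + η) * (q ^ j + η) := by fun_prop
      simpa [pow_succ'] using tendsto_nhdsWithin_of_tendsto_nhds (hcont.tendsto 0)
    obtain ⟨η, hηδ, hη : 0 < η⟩ := ((hlim.eventually_le_const (lt_add_of_pos_right _ hδ)).and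
      self_mem_nhdsWithin).exists
    filter_upwards [ih (K + l) η hη, hW.localMeanLE K η hη, hW.sparse K η hη] with n hpow hmean
      hsparse f
    rw [pow_succ']
    exact ((hpow f).average_mul (hw n) (by positivity) hη.le (hW.isLocalFamily n f) (by positivity)
      (hmean f) (hsparse f)).mono (hw n) le_rfl hηδ

theorem asympMeanLE_posPart_average_sub (hW : IsSparseLocalFamily w l R F W q) (hw : ∀ n, 0 ≤ w n)
    (hq : 0 ≤ q) :
    AsympMeanLE w (fun n f X => ((𝔼 i ∈ R n f, W n f i) X - q)⁺) 0 := by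
  refine .of_forall_gt fun δ hδ => ?_
  have hδ2 : 0 < δ / 2 := half_pos hδ
  have hr0 : 0 < q + δ / 2 := by linarith
  obtain ⟨j, hj⟩ := exists_pow_lt_of_lt_one hδ2 ((div_lt_one hr0).2 (by linarith : q < q + δ / 2))
  have hmoment := (AsympMeanLE.const hw (δ / 2)).add
    ((hW.asympMeanLE_average_pow hw hq j).const_smul hw (inv_nonneg.2 (pow_nonneg hr0.le j)))
  refine (hmoment.mono hw ?_).of_le_add hw fun η hη => .of_forall fun n f X => ?_
  · rw [inv_mul_eq_div, ← div_pow]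
    linarith
  · have hT := (hW.isLocalFamily n f).expect_mem_Icc
    have := posPart_sub_le_add_div_pow (hT.1 X) (hT.2 X) hq hδ2 j
    rw [div_pow, div_eq_inv_mul (_ ^ j)] at this
    exact this.trans (le_add_of_nonneg_right hη.le)

end IsSparseLocalFamily

end AsympMean

section Coordinates

variable {ι α : Type*} [DecidableEq α]

/-- The indicator function of the event that the coordinate `i` takes the value `a`. -/
def coordInd (i : ι) (a : α) (X : ι → α) : ℝ := if X i = a then 1 else 0

theorem dependsOn_coordInd (i : ι) (a : α) : DependsOn (coordInd i a) {i} := fun X Y hXY => by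
  simp only [coordInd, hXY i rfl]

theorem coordInd_mem_Icc (i : ι) (a : α) : coordInd i a ∈ Set.Icc (0 : (ι → α) → ℝ) 1 := by
  constructor <;> intro X <;> simp only [coordInd] <;> split_ifs <;> simp

theorem coordInd_false (i : ι) : coordInd i false = 1 - coordInd i true := by
  funext X
  cases h : X i <;> simp [coordInd, h]

theorem prod_coordInd (F : Finset ι) (a : ι → α) (X : ι → α)
    [Decidable (∀ i ∈ F, X i = a i)] :
    (∏ i ∈ F, coordInd i (a i)) X = if ∀ i ∈ F, X i = a i then 1 else 0 := by
  simp only [Finset.prod_apply, coordInd, prod_ite_zero, prod_const_one]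

theorem sum_cylinder_eq_dotProduct [Fintype (ι → α)] (w : (ι → α) → ℝ) (F : Finset ι) (a : ι → α)
    [DecidablePred fun X : ι → α => ∀ i ∈ F, X i = a i] :
    ∑ X with ∀ i ∈ F, X i = a i, w X = w ⬝ᵥ ∏ i ∈ F, coordInd i (a i) := by
  rw [sum_filter]
  exact sum_congr rfl fun X _ => by rw [prod_coordInd, mul_ite, mul_one, mul_zero]

variable [Fintype (ι → Bool)]

theorem LocalMeanLE.smul_coordInd {w : (ι → Bool) → ℝ} (hw : 0 ≤ w) {K : ℕ} {A : Finset ι} {i : ι}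
    {p δ : ℝ} (hmean : ∀ τ : ℝ, |τ| = 1 → LocalMeanLE w K A (τ • coordInd i true) (τ * p + δ))
    {τ : ℝ} (hτ : |τ| = 1) (b : Bool) :
    LocalMeanLE w K A (τ • coordInd i b) (τ * (if b = true then p else 1 - p) + δ) := by
  cases b
  · have hcompl := (LocalMeanLE.const w K A τ).add (hmean (-τ) (by simpa))
    refine hcompl.mono hw (fun X => ?_) ?_
    · simp only [coordInd_false, Pi.smul_apply, Pi.sub_apply, Pi.add_apply, Pi.one_apply,
        smul_eq_mul]
      linarith
    · simp only [Bool.false_eq_true, if_false]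
      linarith
  · simpa using hmean τ hτ

theorem abs_sum_cylinder_sub_prod_le {w : (ι → Bool) → ℝ} (hw : 0 ≤ w) (hw1 : ∑ X, w X = 1)
    {F : Finset ι} {p : ι → ℝ} {δ : ℝ} (hp : ∀ i ∈ F, p i ∈ Set.Icc (0 : ℝ) 1) (hδ : 0 ≤ δ)
    (hmean : ∀ τ : ℝ, |τ| = 1 → ∀ i ∈ F,
      LocalMeanLE w #F {i} (τ • coordInd i true) (τ * p i + δ)) (a : ι → Bool) :
    |∑ X with ∀ i ∈ F, X i = a i, w X - ∏ i ∈ F, if a i = true then p i else 1 - p i| ≤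
      #F * δ := by
  have hr : ∀ i ∈ F, (if a i = true then p i else 1 - p i) ∈ Set.Icc (0 : ℝ) 1 := fun i hi => by
    have := hp i hi
    split_ifs
    exacts [this, ⟨sub_nonneg.2 this.2, sub_le_self _ this.1⟩]
  have hbound : ∀ τ : ℝ, |τ| = 1 → τ * (w ⬝ᵥ ∏ i ∈ F, coordInd i (a i)) ≤
      τ * (∏ i ∈ F, if a i = true then p i else 1 - p i) + #F * δ := by
    intro τ hτ
    have hprod := LocalMeanLE.smul_prod (K := 0) hw hδ (fun i _ => dependsOn_coordInd i (a i))
      (fun i _ => coordInd_mem_Icc i (a i)) hr fun i hi => by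
        rw [zero_add]
        exact .smul_coordInd hw (fun σ hσ => hmean σ hσ i hi) hτ (a i)
    simpa [dotProduct_one, hw1] using hprod ∅ le_rfl (disjoint_empty_left _) 1 zero_le_one
      ((dependsOn_const 1).mono (Set.empty_subset _))
  have hup := hbound 1 abs_one
  have hlo := hbound (-1) (by simp)
  rw [sum_cylinder_eq_dotProduct, abs_le]
  constructor <;> linarith

theorem abs_sum_forall_eq_sub_pow_le {w : (ι → Bool) → ℝ} (hw : 0 ≤ w) (hw1 : ∑ X, w X = 1)
    {κ : Type*} [Fintype κ] {e : κ → ι} (he : Injective e) {p δ : ℝ} (hp : p ∈ Set.Icc (0 : ℝ) 1)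
    (hδ : 0 ≤ δ) (hmean : ∀ τ : ℝ, |τ| = 1 → ∀ j,
      LocalMeanLE w (Fintype.card κ) {e j} (τ • coordInd (e j) true) (τ * p + δ)) (a : κ → Bool) :
    |∑ X with ∀ j, X (e j) = a j, w X - p ^ #{j | a j = true} *
      (1 - p) ^ (Fintype.card κ - #{j | a j = true})| ≤ Fintype.card κ * δ := by
  have hcylinder (X : ι → Bool) :
      (∀ i ∈ univ.map ⟨e, he⟩, X i = extend e a (fun _ => true) i) ↔ ∀ j, X (e j) = a j := by
    simp [he.extend_apply]
  have hprod : ∏ j, (if a j = true then p else 1 - p) =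
      p ^ #{j | a j = true} * (1 - p) ^ (Fintype.card κ - #{j | a j = true}) := by
    rw [prod_ite, prod_const, prod_const, filter_not, card_sdiff_of_subset (filter_subset _ _),
      card_univ]
  have hmain := abs_sum_cylinder_sub_prod_le hw hw1 (F := univ.map ⟨e, he⟩) (p := fun _ => p)
    (fun _ _ => hp) hδ (fun τ hτ => by simpa using hmean τ hτ) (extend e a fun _ => true)
  simp only [hcylinder, prod_map, Embedding.coeFn_mk, he.extend_apply, hprod, card_map, card_univ]
    at hmain
  convert hmain

end Coordinates

section Counting

theorem exists_perm_map_eq {α : Type*} {e e' : Sym2 α} (he : ¬e.IsDiag) (he' : ¬e'.IsDiag) :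
    ∃ π : Equiv.Perm α, e.map π = e' := by
  induction e using Sym2.ind with | h u v => ?_
  induction e' using Sym2.ind with | h u' v' => ?_
  obtain ⟨π, hu, hv⟩ := MulAction.is_two_pretransitive_iff.1
    (Equiv.Perm.isMultiplyPretransitive α 2) (Sym2.mk_isDiag_iff.not.1 he)
    (Sym2.mk_isDiag_iff.not.1 he')
  exact ⟨π, congrArg₂ (s(·, ·)) hu hv⟩

theorem card_embedding_subset_range_le {κ β : Type*} [Fintype κ] [Fintype β] (B : Finset β) :
    #{v : κ ↪ β | ∀ y ∈ B, y ∈ Set.range v} ≤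
      (Fintype.card κ).descFactorial #B * Fintype.card β ^ (Fintype.card κ - #B) := by
  have hfiber (j : B ↪ κ) : #{v : κ ↪ β | ∀ y, v (j y) = y} ≤
      Fintype.card β ^ (Fintype.card κ - #B) := by
    have hcompl : Fintype.card {x // x ∉ Set.range j} = Fintype.card κ - #B := by
      rw [← Fintype.card_coe B, ← Set.card_range_of_injective j.injective]
      exact Fintype.card_subtype_compl _
    rw [← hcompl, ← Fintype.card_fun, ← card_univ]
    refine card_le_card_of_injOn (fun v x => v x) (fun _ _ => mem_coe.2 (mem_univ _)) ?_
    intro v hv v' hv' hvv'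
    simp only [coe_filter, mem_univ, true_and, Set.mem_ofPred_eq] at hv hv'
    refine DFunLike.ext v v' fun x => ?_
    by_cases hx : x ∈ Set.range j
    · obtain ⟨y, rfl⟩ := hx
      rw [hv, hv']
    · exact congrFun hvv' ⟨x, hx⟩
  have hcover : ({v : κ ↪ β | ∀ y ∈ B, y ∈ Set.range v} : Finset (κ ↪ β)) ⊆
      univ.biUnion fun j : B ↪ κ => {v : κ ↪ β | ∀ y, v (j y) = y} := by
    intro v hv
    simp only [mem_filter, mem_univ, true_and] at hv
    choose j hj using fun y : B => hv y y.2
    simp only [mem_biUnion, mem_filter, mem_univ, true_and]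
    exact ⟨⟨j, fun y y' h => Subtype.ext (by rw [← hj y, h, hj])⟩, hj⟩
  rw [← Fintype.card_coe B, ← Fintype.card_embedding_eq, ← card_univ, Fintype.card_coe B]
  exact (card_le_card hcover).trans (card_biUnion_le_card_mul _ _ _ fun j _ => hfiber j)

variable {m n : ℕ}

theorem card_edgeK (n : ℕ) : Fintype.card (EdgeK n) = n.choose 2 := by
  rw [Sym2.card_subtype_not_diag, Fintype.card_fin]

theorem mapEdge_injective (v : Fin m ↪ Fin n) : Injective (mapEdge v) := fun _ _ hab =>
  Subtype.ext (Sym2.map.injective v.injective (congrArg Subtype.val hab))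

/-- The embeddings of the vertices of the pattern `G` into `[n]` which map some edge of `G` to the
edge `f`. -/
noncomputable def rootedEmbeddings (G : Finset (EdgeK m)) (f : EdgeK n) : Finset (Fin m ↪ Fin n) :=
  {v | ∃ a ∈ G, mapEdge v a = f}

/-- The edges of the copy of the pattern `G` under `v`, except the root `f`. -/
def nonrootEdges (G : Finset (EdgeK m)) (f : EdgeK n) (v : Fin m ↪ Fin n) : Finset (EdgeK n) :=
  (G.image (mapEdge v)).erase f

variable {G : Finset (EdgeK m)} {f : EdgeK n} {v : Fin m ↪ Fin n}

theorem mem_rootedEmbeddings : v ∈ rootedEmbeddings G f ↔ ∃ a ∈ G, mapEdge v a = f := by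
  simp [rootedEmbeddings]

theorem disjoint_nonrootEdges_singleton : Disjoint (nonrootEdges G f v) {f} :=
  disjoint_singleton_right.2 (notMem_erase f _)

theorem card_nonrootEdges (hv : v ∈ rootedEmbeddings G f) : #(nonrootEdges G f v) = #G - 1 := by
  rw [nonrootEdges, card_erase_of_mem (mem_image.2 (mem_rootedEmbeddings.1 hv)),
    card_image_of_injective _ (mapEdge_injective v)]

theorem forall_addEdge_iff (X : Config n) :
    (∀ a ∈ G, addEdge X f (mapEdge v a) = true) ↔ ∀ g ∈ nonrootEdges G f v, X g = true := by
  simp only [nonrootEdges, mem_erase, mem_image, addEdge, ite_eq_left_iff]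
  exact ⟨fun h g ⟨hg, a, ha, hag⟩ => hag ▸ h a ha (hag ▸ hg),
    fun h a ha hne => h _ ⟨hne, a, ha, rfl⟩⟩

theorem rootedCount_eq_sum (X : Config n) (G : Finset (EdgeK m)) (f : EdgeK n) :
    (rootedCount X G f : ℝ) =
      ∑ v ∈ rootedEmbeddings G f, (∏ g ∈ nonrootEdges G f v, coordInd g true) X := by
  simp only [prod_coordInd (a := fun _ => true), sum_boole, rootedCount, rootedEmbeddings,
    filter_filter, forall_addEdge_iff]

theorem card_rootedEmbeddings_le (G : Finset (EdgeK m)) (f f' : EdgeK n) :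
    #(rootedEmbeddings G f) ≤ #(rootedEmbeddings G f') := by
  obtain ⟨π, hπ⟩ := exists_perm_map_eq f.2 f'.2
  refine card_le_card_of_injOn (fun v => v.trans π.toEmbedding) (fun v hv => ?_) fun v _ v' _ h =>
    DFunLike.ext v v' fun x => π.injective (DFunLike.congr_fun h x)
  obtain ⟨a, ha, hav⟩ := mem_rootedEmbeddings.1 hv
  refine mem_rootedEmbeddings.2 ⟨a, ha, Subtype.ext ?_⟩
  rw [← hπ, ← hav]
  exact (Sym2.map_map (f := v) (g := π) a.1).symm

theorem choose_two_mul_card_rootedEmbeddings (G : Finset (EdgeK m)) (f : EdgeK n) :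
    n.choose 2 * #(rootedEmbeddings G f) = #G * n.descFactorial m := by
  have hdouble := sum_card_bipartiteAbove_eq_sum_card_bipartiteBelow
    (s := (univ : Finset (EdgeK n))) (t := (univ : Finset (Fin m ↪ Fin n)))
    fun f v => ∃ a ∈ G, mapEdge v a = f
  have hright (v : Fin m ↪ Fin n) : #{f | ∃ a ∈ G, mapEdge v a = f} = #G := by
    rw [← card_image_of_injective G (mapEdge_injective v)]
    congr 1
    ext
    simp
  have hleft (f' : EdgeK n) : #(rootedEmbeddings G f') = #(rootedEmbeddings G f) :=
    (card_rootedEmbeddings_le G f' f).antisymm (card_rootedEmbeddings_le G f f')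
  calc n.choose 2 * #(rootedEmbeddings G f) = ∑ f' : EdgeK n, #(rootedEmbeddings G f') := by
        simp only [hleft, sum_const, card_univ, card_edgeK, smul_eq_mul]
    _ = ∑ v : Fin m ↪ Fin n, #{f | ∃ a ∈ G, mapEdge v a = f} := hdouble
    _ = #G * n.descFactorial m := by
        simp only [hright, sum_const, card_univ, Fintype.card_embedding_eq, Fintype.card_fin,
          smul_eq_mul, mul_comm]

theorem tendsto_descFactorial_div_choose_two (hm : 2 ≤ m) :
    Tendsto (fun n : ℕ => (n.descFactorial m / n.choose 2 : ℝ) / n ^ (m - 2)) atTop (𝓝 2) := by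
  have hequiv := ((isEquivalent_descFactorial m).div (isEquivalent_choose 2)).div
    (Asymptotics.IsEquivalent.refl (u := fun n : ℕ => (n ^ (m - 2) : ℝ)))
  refine hequiv.symm.tendsto_nhds (tendsto_const_nhds.congr' ?_)
  filter_upwards [eventually_gt_atTop 0] with n hn
  have hpow : (n : ℝ) ^ m = n ^ 2 * n ^ (m - 2) := by rw [← pow_add, Nat.add_sub_cancel' hm]
  simp only [hpow, Pi.div_apply]
  field_simp
  norm_num

theorem two_le_of_nonempty (hG : G.Nonempty) : 2 ≤ m := by
  have hpos : 0 < Fintype.card (EdgeK m) := Fintype.card_pos_iff.2 ⟨hG.choose⟩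
  rw [card_edgeK] at hpos
  exact not_lt.1 fun hm => hpos.ne' (Nat.choose_eq_zero_of_lt hm)

theorem eventually_abs_card_rootedEmbeddings_div_sub_le (G : Finset (EdgeK m)) {δ : ℝ}
    (hδ : 0 < δ) :
    ∀ᶠ n : ℕ in atTop, ∀ f : EdgeK n,
      |(#(rootedEmbeddings G f) : ℝ) / n ^ (m - 2) - 2 * #G| ≤ δ := by
  rcases G.eq_empty_or_nonempty with rfl | hG
  · simp [rootedEmbeddings, hδ.le]
  have hlim := (tendsto_descFactorial_div_choose_two (two_le_of_nonempty hG)).const_mul (#G : ℝ)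
  filter_upwards [Metric.tendsto_nhds.1 hlim δ hδ, eventually_ge_atTop 2] with n hdist hn f
  have hchoose : (n.choose 2 : ℝ) ≠ 0 := by exact_mod_cast (Nat.choose_pos hn).ne'
  have hcard : (#(rootedEmbeddings G f) : ℝ) = #G * (n.descFactorial m / n.choose 2) := by
    rw [← mul_div_assoc, eq_div_iff hchoose, mul_comm]
    exact_mod_cast choose_two_mul_card_rootedEmbeddings G f
  rw [hcard, mul_div_assoc, mul_comm 2]
  exact hdist.le

theorem exists_subset_card_eq_three {g : EdgeK n} (hgf : g ≠ f) :
    ∃ B : Finset (Fin n), #B = 3 ∧ ∀ x ∈ B, x ∈ f.1 ∨ x ∈ g.1 := by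
  have hcard (e : EdgeK n) : #e.1.toFinset = 2 := Sym2.card_toFinset_of_not_isDiag _ e.2
  have hne : g.1.toFinset ≠ f.1.toFinset := fun h =>
    hgf (Subtype.ext (Sym2.ext fun x => by simpa using congrArg (x ∈ ·) h))
  have hthree : 3 ≤ #(f.1.toFinset ∪ g.1.toFinset) := by
    by_contra! hlt
    have hf : f.1.toFinset = f.1.toFinset ∪ g.1.toFinset :=
      eq_of_subset_of_card_le subset_union_left (by rw [hcard]; omega)
    have hg : g.1.toFinset = f.1.toFinset ∪ g.1.toFinset :=
      eq_of_subset_of_card_le subset_union_right (by rw [hcard]; omega)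
    exact hne (hg.trans hf.symm)
  obtain ⟨B, hB, hB3⟩ := exists_subset_card_eq hthree
  exact ⟨B, hB3, fun x hx => by simpa using hB hx⟩

theorem card_filter_mem_nonrootEdges_le (G : Finset (EdgeK m)) (f g : EdgeK n) :
    #{v ∈ rootedEmbeddings G f | g ∈ nonrootEdges G f v} ≤ m.descFactorial 3 * n ^ (m - 3) := by
  rcases eq_or_ne g f with rfl | hgf
  · simp [nonrootEdges]
  obtain ⟨B, hB3, hB⟩ := exists_subset_card_eq_three hgf
  refine (card_le_card fun v hv => ?_).trans
    (by simpa [hB3] using card_embedding_subset_range_le (κ := Fin m) B)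
  simp only [mem_filter, mem_rootedEmbeddings, nonrootEdges, mem_erase, mem_image] at hv
  obtain ⟨⟨a, -, rfl⟩, -, b, -, rfl⟩ := hv
  refine mem_filter.2 ⟨mem_univ v, fun x hx => ?_⟩
  rcases hB x hx with h | h <;> obtain ⟨y, -, rfl⟩ := Sym2.mem_map.1 h <;> exact ⟨y, rfl⟩

theorem card_filter_not_disjoint_nonrootEdges_le (G : Finset (EdgeK m)) (f : EdgeK n)
    (S : Finset (EdgeK n)) :
    #{v ∈ rootedEmbeddings G f | ¬Disjoint S (nonrootEdges G f v)} ≤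
      #S * (m.descFactorial 3 * n ^ (m - 3)) := by
  refine (card_le_card fun v hv => ?_).trans
    (card_biUnion_le_card_mul S _ _ fun g _ => card_filter_mem_nonrootEdges_le G f g)
  obtain ⟨hv, hvS⟩ := mem_filter.1 hv
  obtain ⟨g, hg, hgv⟩ := not_disjoint_iff.1 hvS
  exact mem_biUnion.2 ⟨g, hg, mem_filter.2 ⟨hv, hgv⟩⟩

theorem eventually_pow_le_card_rootedEmbeddings (hG : G.Nonempty) :
    ∀ᶠ n : ℕ in atTop, ∀ f : EdgeK n, (n : ℝ) ^ (m - 2) ≤ #(rootedEmbeddings G f) := by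
  filter_upwards [eventually_abs_card_rootedEmbeddings_div_sub_le G one_pos,
    eventually_gt_atTop 0] with n hcard hn f
  have hG1 : (1 : ℝ) ≤ #G := by exact_mod_cast hG.card_pos
  have hn0 : (0 : ℝ) < (n : ℝ) ^ (m - 2) := by positivity
  rw [← one_le_div hn0]
  linarith [(abs_le.1 (hcard f)).1]

theorem eventually_card_filter_not_disjoint_nonrootEdges_le (hG : G.Nonempty) (K : ℕ) {δ : ℝ}
    (hδ : 0 < δ) :
    ∀ᶠ n : ℕ in atTop, ∀ (f : EdgeK n) (S : Finset (EdgeK n)), #S ≤ K →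
      (#{v ∈ rootedEmbeddings G f | ¬Disjoint S (nonrootEdges G f v)} : ℝ) ≤
        δ * #(rootedEmbeddings G f) := by
  filter_upwards [eventually_pow_le_card_rootedEmbeddings hG,
    eventually_ge_atTop ⌈(K * m.descFactorial 3 : ℝ) / δ⌉₊] with n hcard hn f S hS
  have hn' : (K * m.descFactorial 3 : ℝ) ≤ δ * n := (div_le_iff₀' hδ).1 (Nat.ceil_le.1 hn)
  calc (#{v ∈ rootedEmbeddings G f | ¬Disjoint S (nonrootEdges G f v)} : ℝ)
      ≤ #S * (m.descFactorial 3 * n ^ (m - 3)) := by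
        exact_mod_cast card_filter_not_disjoint_nonrootEdges_le G f S
    _ ≤ K * (m.descFactorial 3 * n ^ (m - 3)) := by gcongr
    _ ≤ δ * n ^ (m - 2) := by
        rcases Nat.lt_or_ge m 3 with hm | hm
        · rw [Nat.descFactorial_eq_zero_iff_lt.2 hm]
          simpa using by positivity
        · rw [show m - 2 = m - 3 + 1 by omega, pow_succ', ← mul_assoc, ← mul_assoc]
          gcongr
    _ ≤ δ * #(rootedEmbeddings G f) := by gcongr; exact hcard f

end Counting

section Resampling

variable {ι : Type*} [DecidableEq ι] {i : ι}

theorem apply_update_of_dependsOn {α β : Type*} {h : (ι → α) → β} (hh : DependsOn h {i}ᶜ)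
    (X : ι → α) (a : α) : h (update X i a) = h X :=
  hh fun _ hj => update_of_ne hj _ _

variable [Fintype (ι → Bool)]

theorem sum_eq_zero_of_update_add_update {g : (ι → Bool) → ℝ}
    (hg : ∀ X, g (update X i true) + g (update X i false) = 0) : ∑ X, g X = 0 := by
  refine sum_involution (fun X _ => update X i !X i) (fun X _ => ?_) (fun X _ _ hX => ?_)
    (fun _ _ => mem_univ _) (fun X _ => ?_)
  · have hself : X = update X i (X i) := (update_eq_self i X).symm
    cases hXi : X i <;> rw [hXi] at hself
    · simpa only [Bool.not_false, ← hself, add_comm] using hg X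
    · simpa only [Bool.not_true, ← hself] using hg X
  · simpa using congrFun hX i
  · simp

theorem dotProduct_mul_coordInd_true {w h D : (ι → Bool) → ℝ}
    (hw : ∀ X, w (update X i true) = w (update X i false) * Real.exp (D X))
    (hD : DependsOn D {i}ᶜ) (hh : DependsOn h {i}ᶜ) :
    w ⬝ᵥ (h * coordInd i true) = w ⬝ᵥ (h * fun X => Real.sigmoid (D X)) := by
  rw [← sub_eq_zero, ← dotProduct_sub]
  refine sum_eq_zero_of_update_add_update (i := i) fun X => ?_
  simp only [Pi.sub_apply, Pi.mul_apply, apply_update_of_dependsOn hh, apply_update_of_dependsOn hD,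
    hw, coordInd, update_self, Bool.false_eq_true, if_true, if_false, Real.sigmoid_def,
    Real.exp_neg]
  have := Real.exp_pos (D X)
  field_simp
  ring

theorem LocalMeanLE.of_sigmoid {w D : (ι → Bool) → ℝ}
    (hw : ∀ X, w (update X i true) = w (update X i false) * Real.exp (D X))
    (hD : DependsOn D {i}ᶜ) {K : ℕ} {τ c : ℝ}
    (hmean : LocalMeanLE w K {i} (τ • fun X => Real.sigmoid (D X)) c) :
    LocalMeanLE w K {i} (τ • coordInd i true) c := by
  intro S hS hSi h hh hdep
  have hdep' : DependsOn h {i}ᶜ :=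
    hdep.mono fun j hj hji => disjoint_singleton_right.1 hSi (hji ▸ hj)
  simpa only [mul_smul_comm, dotProduct_smul, dotProduct_mul_coordInd_true hw hD hdep'] using
    hmean S hS hSi h hh hdep

end Resampling

section Gibbs

variable {n m : ℕ}

theorem setEdge_eq_update (X : Config n) (f : EdgeK n) (b : Bool) :
    setEdge X f b = update X f b := by
  funext g
  simp [setEdge, update_apply]

theorem copyCount_setEdge_true (X : Config n) (G : Finset (EdgeK m)) (f : EdgeK n) :
    copyCount (setEdge X f true) G = copyCount (setEdge X f false) G + rootedCount X G f := by
  have hmiss (v : Fin m ↪ Fin n) : ((∀ a ∈ G, setEdge X f true (mapEdge v a) = true) ∧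
      ¬∃ a ∈ G, mapEdge v a = f) ↔ ∀ a ∈ G, setEdge X f false (mapEdge v a) = true := by
    simp only [setEdge, not_exists, not_and, ← forall_and]
    exact forall₂_congr fun a _ => by split_ifs with h <;> simp [h]
  have hhit (v : Fin m ↪ Fin n) : ((∀ a ∈ G, setEdge X f true (mapEdge v a) = true) ∧
      ∃ a ∈ G, mapEdge v a = f) ↔
      (∃ a ∈ G, mapEdge v a = f) ∧ ∀ a ∈ G, addEdge X f (mapEdge v a) = true := and_comm
  rw [copyCount, ← card_filter_add_card_filter_not fun v => ∃ a ∈ G, mapEdge v a = f,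
    filter_filter, filter_filter, add_comm, copyCount, rootedCount]
  simp only [hmiss, hhit]

variable {s : ℕ} {V : Fin s → ℕ} {Pt : ∀ i, Finset (EdgeK (V i))} {β : Fin s → ℝ}

theorem dH_eq_sum (X : Config n) (f : EdgeK n) :
    dH V Pt β n X f = ∑ i, β i * (rootedCount X (Pt i) f / (n : ℝ) ^ (V i - 2)) := by
  rw [dH, ergmH, ergmH, ← sum_sub_distrib]
  refine sum_congr rfl fun i _ => ?_
  rw [copyCount_setEdge_true]
  push_cast
  ring

theorem dependsOn_dH (f : EdgeK n) : DependsOn (fun X => dH V Pt β n X f) {f}ᶜ := by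
  intro X Y hXY
  have hset (b : Bool) : setEdge X f b = setEdge Y f b := by
    funext g
    rw [setEdge, setEdge]
    split_ifs with hg
    exacts [rfl, hXY g hg]
  simp only [dH, hset]

theorem gibbs_nonneg : 0 ≤ gibbs V Pt β n := fun _ =>
  div_nonneg (Real.exp_pos _).le (sum_nonneg fun _ _ => (Real.exp_pos _).le)

theorem sum_gibbs : ∑ X, gibbs V Pt β n X = 1 := by
  simp only [gibbs, ← sum_div]
  exact div_self (sum_pos (fun _ _ => Real.exp_pos _) univ_nonempty).ne'

theorem gibbs_update_true (X : Config n) (f : EdgeK n) :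
    gibbs V Pt β n (update X f true) =
      gibbs V Pt β n (update X f false) * Real.exp (dH V Pt β n X f) := by
  simp only [← setEdge_eq_update]
  rw [gibbs, gibbs, div_mul_eq_mul_div, ← Real.exp_add, dH, add_sub_cancel]

theorem phiF_eq_sigmoid (p : ℝ) : phiF Pt β p = Real.sigmoid (PsiF Pt β p) := by
  rw [phiF, Real.sigmoid_def, Real.exp_neg]
  have := Real.exp_pos (PsiF Pt β p)
  field_simp
  rw [add_comm]

theorem phiF_mem_Icc (p : ℝ) : phiF Pt β p ∈ Set.Icc (0 : ℝ) 1 := by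
  rw [phiF_eq_sigmoid]
  exact ⟨Real.sigmoid_nonneg _, Real.sigmoid_le_one _⟩

theorem continuous_phiF : Continuous (phiF Pt β) := by
  rw [funext phiF_eq_sigmoid]
  unfold PsiF
  fun_prop

theorem fixedPoints_phiF_eq {p : ℝ} (hp : HighTemp Pt β p) : fixedPoints (phiF Pt β) = {p} := by
  refine Set.eq_singleton_iff_unique_mem.2 ⟨hp.2.1, fun q hq => hp.2.2.1 q ?_ hq⟩
  rw [← show phiF Pt β q = q from hq]
  exact phiF_mem_Icc q

end Gibbs

section RootedDensity

/-- The proportion, among the embeddings of the pattern `G` rooted at `f`, of those whose nonroot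
edges all belong to the random graph. -/
noncomputable def rootedDensity {m n : ℕ} (G : Finset (EdgeK m)) (f : EdgeK n) : Config n → ℝ :=
  𝔼 v ∈ rootedEmbeddings G f, ∏ g ∈ nonrootEdges G f v, coordInd g true

theorem prod_coordInd_mem_Icc {ι : Type*} (F : Finset ι) :
    ∏ g ∈ F, coordInd g true ∈ Set.Icc (0 : (ι → Bool) → ℝ) 1 :=
  ⟨prod_nonneg fun g _ => (coordInd_mem_Icc g true).1,
    prod_le_one (fun g _ => (coordInd_mem_Icc g true).1) fun g _ => (coordInd_mem_Icc g true).2⟩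

variable {m : ℕ} {G : Finset (EdgeK m)}

theorem isLocalFamily_nonrootEdges {n : ℕ} (f : EdgeK n) :
    IsLocalFamily {f} (#G - 1) (rootedEmbeddings G f) (nonrootEdges G f)
      fun v => ∏ g ∈ nonrootEdges G f v, coordInd g true where
  disjoint _ _ := disjoint_nonrootEdges_singleton
  card_le _ hv := (card_nonrootEdges hv).le
  dependsOn _ _ := dependsOn_prod fun g _ => dependsOn_coordInd g true
  mem_Icc _ _ := prod_coordInd_mem_Icc _

theorem rootedDensity_mem_Icc {n : ℕ} (f : EdgeK n) :
    rootedDensity G f ∈ Set.Icc (0 : Config n → ℝ) 1 :=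
  (isLocalFamily_nonrootEdges f).expect_mem_Icc

theorem rootedCount_eq_card_mul_rootedDensity {n : ℕ} (X : Config n) (f : EdgeK n) :
    (rootedCount X G f : ℝ) = #(rootedEmbeddings G f) * rootedDensity G f X := by
  rw [rootedDensity, expect_apply, card_mul_expect, rootedCount_eq_sum]

theorem rootedDensity_eq_one {n : ℕ} {f : EdgeK n} (hG : #G ≤ 1)
    (hR : (rootedEmbeddings G f).Nonempty) : rootedDensity G f = 1 := by
  rw [rootedDensity, expect_congr rfl fun v hv => ?_, expect_const hR]
  rw [card_eq_zero.1 ((card_nonrootEdges hv).trans (Nat.sub_eq_zero_of_le hG)), prod_empty]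

theorem eventually_rootedEmbeddings_nonempty (hG : G.Nonempty) :
    ∀ᶠ n in atTop, ∀ f : EdgeK n, (rootedEmbeddings G f).Nonempty := by
  filter_upwards [eventually_pow_le_card_rootedEmbeddings hG,
    eventually_gt_atTop 0] with n hcard hn f
  have : (0 : ℝ) < #(rootedEmbeddings G f) := lt_of_lt_of_le (by positivity) (hcard f)
  exact card_pos.1 (by exact_mod_cast this)

/-- The affine map `t ↦ (1 - τ) / 2 + τ t` is the identity for `τ = 1` and `t ↦ 1 - t` for
`τ = -1`: it turns lower bounds on densities into upper bounds on nonnegative functions. -/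
theorem sign_affine_mem_Icc {Ω : Type*} {τ : ℝ} (hτ : |τ| = 1) {u : Ω → ℝ}
    (hu : u ∈ Set.Icc 0 1) : (fun _ => (1 - τ) / 2) + τ • u ∈ Set.Icc (0 : Ω → ℝ) 1 := by
  obtain rfl | rfl := (abs_eq zero_le_one).1 hτ <;>
    refine ⟨fun X => ?_, fun X => ?_⟩ <;> have h0 := hu.1 X <;> have h1 := hu.2 X <;>
    simp at h0 h1 ⊢ <;> linarith

end RootedDensity

section EdgeDensityBound

variable {w : ∀ n, Config n → ℝ} {τ M : ℝ} {m : ℕ} {G : Finset (EdgeK m)}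

theorem isLocalFamily_sign_affine (hτ : |τ| = 1) {n : ℕ} (f : EdgeK n) :
    IsLocalFamily {f} (#G - 1) (rootedEmbeddings G f) (nonrootEdges G f)
      fun v => (fun _ => (1 - τ) / 2) + τ • ∏ g ∈ nonrootEdges G f v, coordInd g true where
  disjoint := (isLocalFamily_nonrootEdges f).disjoint
  card_le := (isLocalFamily_nonrootEdges f).card_le
  dependsOn v hv X Y hXY := by
    simp only [Pi.add_apply, Pi.smul_apply, (isLocalFamily_nonrootEdges f).dependsOn v hv hXY]
  mem_Icc _ _ := sign_affine_mem_Icc hτ (prod_coordInd_mem_Icc _)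

theorem localMeanLE_sign_affine {n K : ℕ} {w : Config n → ℝ} (hw : 0 ≤ w)
    (hM : M ∈ Set.Icc (0 : ℝ) 1) {δ : ℝ} (hδ : 0 ≤ δ)
    (hmean : ∀ f, LocalMeanLE w (K + #G) {f} (τ • coordInd f true) (τ * M + δ))
    {f : EdgeK n} {v : Fin m ↪ Fin n} (hv : v ∈ rootedEmbeddings G f) :
    LocalMeanLE w K (nonrootEdges G f v)
      ((fun _ => (1 - τ) / 2) + τ • ∏ g ∈ nonrootEdges G f v, coordInd g true)
      ((1 - τ) / 2 + τ * M ^ (#G - 1) + #G * δ) := by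
  have hcard : #(nonrootEdges G f v) ≤ #G := (card_nonrootEdges hv).trans_le (Nat.sub_le _ _)
  have hprod := LocalMeanLE.smul_prod hw hδ (τ := τ)
    (fun g _ => dependsOn_coordInd g true) (fun g _ => coordInd_mem_Icc g true) (fun _ _ => hM)
    fun g (_ : g ∈ nonrootEdges G f v) => (hmean g).of_card_le (Nat.add_le_add_left hcard K)
  have herror : (#(nonrootEdges G f v) : ℝ) * δ ≤ #G * δ := by gcongr
  rw [prod_const, card_nonrootEdges hv] at hprod
  rw [card_nonrootEdges hv] at herror
  exact ((LocalMeanLE.const _ _ _ _).add hprod).mono hw le_rfl (by linarith)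

theorem isSparseLocalFamily_nonrootEdges (hw : ∀ n, 0 ≤ w n) (hτ : |τ| = 1)
    (hM : M ∈ Set.Icc (0 : ℝ) 1) (hmean : AsympMeanLE w (fun _ f => τ • coordInd f true) (τ * M))
    (hG : G.Nonempty) :
    IsSparseLocalFamily w (#G - 1) (fun _ => rootedEmbeddings G) (fun _ => nonrootEdges G)
      (fun _ f v => (fun _ => (1 - τ) / 2) + τ • ∏ g ∈ nonrootEdges G f v, coordInd g true)
      ((1 - τ) / 2 + τ * M ^ (#G - 1)) where
  isLocalFamily _ f := isLocalFamily_sign_affine hτ f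
  localMeanLE K δ hδ := by
    have hG0 : (0 : ℝ) < #G := by exact_mod_cast hG.card_pos
    filter_upwards [hmean (K + #G) (δ / #G) (by positivity)] with n hn f v hv
    have := localMeanLE_sign_affine (hw n) hM (by positivity) hn hv
    rwa [mul_div_cancel₀ _ hG0.ne'] at this
  sparse K δ hδ := by
    filter_upwards [eventually_card_filter_not_disjoint_nonrootEdges_le hG K hδ] with n hn f S hS
    convert hn f S hS

theorem asympMeanLE_posPart_rootedDensity_sub (hw : ∀ n, 0 ≤ w n) (hτ : |τ| = 1)
    (hM : M ∈ Set.Icc (0 : ℝ) 1) (hmean : AsympMeanLE w (fun _ f => τ • coordInd f true) (τ * M))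
    (hG : G.Nonempty) :
    AsympMeanLE w (fun _ f X => (τ * (rootedDensity G f X - M ^ (#G - 1)))⁺) 0 := by
  have hq : 0 ≤ (1 - τ) / 2 + τ * M ^ (#G - 1) :=
    (sign_affine_mem_Icc hτ (u := fun _ : Unit => M ^ (#G - 1))
      ⟨fun _ => pow_nonneg hM.1 _, fun _ => pow_le_one₀ hM.1 hM.2⟩).1 ()
  refine ((isSparseLocalFamily_nonrootEdges hw hτ hM hmean
    hG).asympMeanLE_posPart_average_sub hw hq).of_le_add hw fun δ hδ => ?_
  filter_upwards [eventually_rootedEmbeddings_nonempty hG] with n hR f X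
  rw [expect_add_distrib, expect_const (hR f), ← smul_expect]
  refine (congrArg (·⁺) ?_).trans_le (le_add_of_nonneg_right hδ.le)
  simp only [rootedDensity, Pi.add_apply, Pi.smul_apply, smul_eq_mul]
  ring

theorem asympMeanLE_posPart_mul_rootedDensity_sub (hw : ∀ n, 0 ≤ w n) (hτ : |τ| = 1)
    (hM : M ∈ Set.Icc (0 : ℝ) 1) (hmean : AsympMeanLE w (fun _ f => τ • coordInd f true) (τ * M))
    (hG : G.Nonempty) {b : ℝ} (hb : 0 ≤ b ∨ #G ≤ 1) :
    AsympMeanLE w (fun _ f X => (b * (τ * (rootedDensity G f X - M ^ (#G - 1))))⁺) 0 := by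
  rcases hb with hb | hG1
  · have hsmul := (asympMeanLE_posPart_rootedDensity_sub hw hτ hM hmean hG).const_smul hw hb
    rw [mul_zero] at hsmul
    refine hsmul.of_le_add hw fun δ hδ => .of_forall fun n f X => ?_
    exact (sup_le (mul_le_mul_of_nonneg_left (le_posPart _) hb)
      (mul_nonneg hb (posPart_nonneg _))).trans (le_add_of_nonneg_right hδ.le)
  · refine (AsympMeanLE.const hw 0).of_le_add hw fun δ hδ => ?_
    filter_upwards [eventually_rootedEmbeddings_nonempty hG] with n hR f X
    simp [rootedDensity_eq_one hG1 (hR f), Nat.sub_eq_zero_of_le hG1, hδ.le]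

theorem asympMeanLE_posPart_rootedCount_sub (hw : ∀ n, 0 ≤ w n) (hτ : |τ| = 1)
    (hM : M ∈ Set.Icc (0 : ℝ) 1) (hmean : AsympMeanLE w (fun _ f => τ • coordInd f true) (τ * M))
    {b : ℝ} (hb : 0 ≤ b ∨ #G ≤ 1) :
    AsympMeanLE w (fun n f X => (τ * (b * (rootedCount X G f / (n : ℝ) ^ (m - 2)) -
      2 * b * #G * M ^ (#G - 1)))⁺) 0 := by
  rcases G.eq_empty_or_nonempty with rfl | hG
  · simpa [rootedCount] using AsympMeanLE.const hw 0
  refine (asympMeanLE_posPart_mul_rootedDensity_sub hw hτ hM hmean hG (b := 2 * b * #G)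
    (hb.imp_left fun hb => by positivity)).of_le_add hw fun δ hδ => ?_
  filter_upwards [eventually_abs_card_rootedEmbeddings_div_sub_le G
    (show 0 < δ / (|b| + 1) by positivity)] with n hcard f X
  set D := rootedDensity G f X
  set r := (#(rootedEmbeddings G f) : ℝ) / n ^ (m - 2)
  have hD0 : 0 ≤ D := (rootedDensity_mem_Icc f).1 X
  have hD1 : D ≤ 1 := (rootedDensity_mem_Icc f).2 X
  have hD : |D| ≤ 1 := abs_le.2 ⟨by linarith, hD1⟩
  have herror : τ * b * D * (r - 2 * #G) ≤ δ := by
    calc τ * b * D * (r - 2 * #G) ≤ |τ| * |b| * |D| * |r - 2 * #G| := by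
          simpa only [abs_mul] using le_abs_self (τ * b * D * (r - 2 * #G))
      _ ≤ 1 * (|b| + 1) * 1 * (δ / (|b| + 1)) := by
          gcongr
          exacts [hτ.le, by linarith, hcard f]
      _ = δ := by field_simp
  have hsplit : τ * (b * (rootedCount X G f / (n : ℝ) ^ (m - 2)) - 2 * b * #G * M ^ (#G - 1)) =
      2 * b * #G * (τ * (D - M ^ (#G - 1))) + τ * b * D * (r - 2 * #G) := by
    rw [rootedCount_eq_card_mul_rootedDensity]
    ring
  rw [hsplit]
  refine sup_le (add_le_add (le_posPart _) herror) (add_nonneg (posPart_nonneg _) hδ.le)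

theorem asympMeanLE_posPart_dH_sub (hw : ∀ n, 0 ≤ w n) (hτ : |τ| = 1) (hM : M ∈ Set.Icc (0 : ℝ) 1)
    (hmean : AsympMeanLE w (fun _ f => τ • coordInd f true) (τ * M)) {s : ℕ} {V : Fin s → ℕ}
    {Pt : ∀ i, Finset (EdgeK (V i))} {β : Fin s → ℝ} (hβ : ∀ i, 0 ≤ β i ∨ #(Pt i) ≤ 1) :
    AsympMeanLE w (fun n f X => (τ * (dH V Pt β n X f - PsiF Pt β M))⁺) 0 := by
  have hsum := AsympMeanLE.sum hw (s := univ) fun i _ =>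
    asympMeanLE_posPart_rootedCount_sub hw hτ hM hmean (hβ i)
  rw [sum_const_zero] at hsum
  refine hsum.of_le_add hw fun δ hδ => .of_forall fun n f X => ?_
  rw [dH_eq_sum, PsiF, ← sum_sub_distrib, mul_sum, Finset.sum_apply]
  exact (posPart_sum_le _ _).trans (le_add_of_nonneg_right hδ.le)

end EdgeDensityBound

section FixedPoint

variable {s : ℕ} (V : Fin s → ℕ) (Pt : ∀ i, Finset (EdgeK (V i))) (β : Fin s → ℝ)

/-- The asymptotic upper bounds (for `τ = 1`) or lower bounds (for `τ = -1`) in `[0, 1]` on the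
conditional probability of an edge under the Gibbs measures. -/
def edgeProbBounds (τ : ℝ) : Set ℝ :=
  {M ∈ Set.Icc 0 1 | AsympMeanLE (gibbs V Pt β) (fun _ f => τ • coordInd f true) (τ * M)}

theorem isClosed_edgeProbBounds (τ : ℝ) : IsClosed (edgeProbBounds V Pt β τ) :=
  isClosed_Icc.inter (AsympMeanLE.isClosed_setOf (fun _ => gibbs_nonneg) τ)

theorem one_mem_edgeProbBounds : 1 ∈ edgeProbBounds V Pt β 1 := by
  refine ⟨Set.right_mem_Icc.2 zero_le_one, fun K δ hδ => .of_forall fun n f => ?_⟩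
  refine (LocalMeanLE.const _ _ _ 1).mono gibbs_nonneg ?_ (by linarith)
  simp only [one_smul]
  exact (coordInd_mem_Icc f true).2

theorem zero_mem_edgeProbBounds : 0 ∈ edgeProbBounds V Pt β (-1) := by
  refine ⟨Set.left_mem_Icc.2 zero_le_one, fun K δ hδ => .of_forall fun n f => ?_⟩
  refine (LocalMeanLE.const _ _ _ 0).mono gibbs_nonneg ?_ (by linarith)
  simp only [neg_one_smul]
  exact neg_nonpos.2 (coordInd_mem_Icc f true).1

variable {V Pt β}

theorem mapsTo_phiF_edgeProbBounds (hβ : ∀ i, 0 ≤ β i ∨ #(Pt i) ≤ 1) {τ : ℝ} (hτ : |τ| = 1) :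
    Set.MapsTo (phiF Pt β) (edgeProbBounds V Pt β τ) (edgeProbBounds V Pt β τ) := by
  rintro M ⟨hM, hmean⟩
  refine ⟨phiF_mem_Icc M, ?_⟩
  have hw (n : ℕ) : 0 ≤ gibbs V Pt β n := gibbs_nonneg
  have hsigmoid : AsympMeanLE (gibbs V Pt β)
      (fun n f => τ • fun X => Real.sigmoid (dH V Pt β n X f)) (τ * phiF Pt β M) := by
    have hbound := (AsympMeanLE.const hw (τ * phiF Pt β M)).add
      (asympMeanLE_posPart_dH_sub hw hτ hM hmean hβ)
    rw [add_zero] at hbound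
    refine hbound.of_le_add hw fun δ hδ => .of_forall fun n f X => ?_
    have := mul_sigmoid_sub_le_posPart τ (dH V Pt β n X f) (PsiF Pt β M)
    simp only [Pi.smul_apply, Pi.add_apply, smul_eq_mul, phiF_eq_sigmoid]
    linarith
  exact fun K δ hδ => (hsigmoid K δ hδ).mono fun n hn f =>
    (hn f).of_sigmoid (fun X => gibbs_update_true X f) (dependsOn_dH f)

theorem asympMeanLE_coordInd_of_fixedPoints_eq (hβ : ∀ i, 0 ≤ β i ∨ #(Pt i) ≤ 1) {p : ℝ}
    (hp : fixedPoints (phiF Pt β) = {p}) {τ : ℝ} (hτ : |τ| = 1) :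
    AsympMeanLE (gibbs V Pt β) (fun _ f => τ • coordInd f true) (τ * p) := by
  have hclosed := isClosed_edgeProbBounds V Pt β τ
  have hmaps := mapsTo_phiF_edgeProbBounds hβ hτ
  obtain rfl | rfl := (abs_eq zero_le_one).1 hτ
  · obtain ⟨M, hM, q, hMq, hq⟩ := exists_mem_le_isFixedPt continuous_phiF hclosed
      ⟨0, fun M hM => hM.1.1⟩ hmaps (one_mem_edgeProbBounds V Pt β) (phiF_mem_Icc 1).2
    obtain rfl : q = p := hp.subset hq
    exact hM.2.mono (fun _ => gibbs_nonneg) (by linarith)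
  · obtain ⟨M, hM, q, hqM, hq⟩ : ∃ M ∈ edgeProbBounds V Pt β (-1), ∃ q, q ≤ M ∧
        IsFixedPt (phiF Pt β) q :=
      exists_mem_le_isFixedPt (α := ℝᵒᵈ) continuous_phiF hclosed ⟨(1 : ℝ), fun M hM => hM.1.2⟩
        hmaps (zero_mem_edgeProbBounds V Pt β) (phiF_mem_Icc 0).1
    obtain rfl : q = p := hp.subset hq
    exact hM.2.mono (fun _ => gibbs_nonneg) (by linarith)

end FixedPoint

end ERGM

open ERGM

theorem asymptotic_independence_of_edges_general {s : ℕ} {V : Fin s → ℕ}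
    {Pt : ∀ i, Finset (EdgeK (V i))} {β : Fin s → ℝ} (hβ : ∀ i, 0 ≤ β i ∨ #(Pt i) ≤ 1) {p : ℝ}
    (hp : fixedPoints (phiF Pt β) = {p}) (k : ℕ) {ε : ℝ} (hε : 0 < ε) :
    ∃ N : ℕ, ∀ n ≥ N, ∀ e : Fin k → EdgeK n, Injective e → ∀ a : Fin k → Bool,
      |∑ X : Config n with ∀ i, X (e i) = a i, gibbs V Pt β n X -
        p ^ #{i | a i = true} * (1 - p) ^ (k - #{i | a i = true})| ≤ ε := by
  have hfix : phiF Pt β p = p := hp.superset rfl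
  have hp01 : p ∈ Set.Icc (0 : ℝ) 1 := hfix ▸ phiF_mem_Icc p
  have hδ : 0 < ε / (k + 1) := by positivity
  have hkδ : k * (ε / (k + 1)) ≤ ε := by
    rw [mul_div_left_comm]
    exact mul_le_of_le_one_right hε.le ((div_le_one (by positivity)).2 (by linarith))
  have hupper := asympMeanLE_coordInd_of_fixedPoints_eq hβ hp abs_one k _ hδ
  have hlower := asympMeanLE_coordInd_of_fixedPoints_eq hβ hp (τ := -1) (by simp) k _ hδ
  obtain ⟨N, hN⟩ := eventually_atTop.1 (hupper.and hlower)
  refine ⟨N, fun n hn e he a => ?_⟩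
  have hmean (τ : ℝ) (hτ : |τ| = 1) (j : Fin k) : LocalMeanLE (gibbs V Pt β n) k {e j}
      (τ • coordInd (e j) true) (τ * p + ε / (k + 1)) := by
    obtain rfl | rfl := (abs_eq zero_le_one).1 hτ
    exacts [(hN n hn).1 (e j), (hN n hn).2 (e j)]
  have hbound := abs_sum_forall_eq_sub_pow_le gibbs_nonneg sum_gibbs he hp01 hδ.le
    (by simpa only [Fintype.card_fin] using hmean) a
  rw [Fintype.card_fin] at hbound
  refine (le_of_eq ?_).trans (hbound.trans hkδ)
  congr!

/-- **Asymptotic independence of edges (Theorem 3).** In the high temperature phase with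
unique fixed point `p*`, any finite collection of distinct edge indicators is asymptotically
independent `Bernoulli(p*)`. -/
theorem asymptotic_independence_of_edges
    {L s : ℕ} (hL : 2 ≤ L) (hs : 0 < s)
    (V : Fin s → ℕ) (Pt : ∀ i, Finset (EdgeK (V i))) (β : Fin s → ℝ)
    (hV2 : ∀ i, 2 ≤ V i) (hVL : ∀ i, V i ≤ L)
    (hG1V : V ⟨0, hs⟩ = 2) (hG1E : (Pt ⟨0, hs⟩).card = 1)
    (hβ : ∀ i : Fin s, 0 < (i : ℕ) → 0 < β i)
    (pstar : ℝ) (hHT : HighTemp Pt β pstar)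
    (k : ℕ) (hk : 1 ≤ k) (ε : ℝ) (hε : 0 < ε) :
    ∃ N : ℕ, ∀ n ≥ N, ∀ e : Fin k → EdgeK n, Function.Injective e → ∀ a : Fin k → Bool,
      |(∑ X ∈ univ.filter (fun X : Config n => ∀ i, X (e i) = a i), gibbs V Pt β n X) -
          pstar ^ ((univ.filter fun i => a i = true).card) *
            (1 - pstar) ^ (k - (univ.filter fun i => a i = true).card)| ≤ ε := by
  have hβ' (i : Fin s) : 0 ≤ β i ∨ #(Pt i) ≤ 1 := by
    rcases Nat.eq_zero_or_pos i with hi | hi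
    · obtain rfl : i = ⟨0, hs⟩ := Fin.ext hi
      exact .inr hG1E.le
    · exact .inl (hβ i hi).le
  exact asymptotic_independence_of_edges_general hβ' (fixedPoints_phiF_eq hHT) k hε
end
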